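/- (Generalized discrete Riesz inequality.) Let d ≥ 2, let u, v : ℤ^d → [0,∞) be admissible, u* = R_{ℤ^d} u, v* = R_{ℤ^d} v, let H : [0,∞) → [0,∞) be nonincreasing, and let G : [0,∞)×[0,∞) → [0,∞) be supermodular with G(0,0) = 0. Then Σ_{x,y∈ℤ^d} G(u(x), v(y)) H(d(x,y)) ≤ Σ_{x,y∈ℤ^d} G(u*(x), v*(y)) H(d(x,y)), where the sums are taken in [0,∞]. Moreover, if u is Schwarz symmetric with strictly decreasing values a₁(u) > a₂(u) > a₃(u) > ⋯, G is strictly supermodular, H(n) > H(n+1) for some n ∈ ℕ, and Σ_{x,y∈ℤ^d} G(u*(x), v*(y)) H(d(x,y)) < ∞, then equality holds if and only if v = v*. -/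

import Mathlib

open Filter Topology

noncomputable section

abbrev ZLat (d : ℕ) := Fin d → ℤ

def stdVec (d : ℕ) (i : Fin d) : Fin d → ℝ := fun j => if j = i then 1 else 0

/-- The set of directions E⃗ ⊆ ℝ^d. -/
def Evec (d : ℕ) : Set (Fin d → ℝ) :=
  {e | (∃ i, e = stdVec d i) ∨
    (∃ i j : Fin d, i < j ∧ e = fun k => (stdVec d i k + stdVec d j k) / 2) ∨
    (∃ i j : Fin d, i < j ∧ e = fun k => (stdVec d i k - stdVec d j k) / 2)}

/-- A fixed enumeration of E⃗ (for d = 2 it is e₁, e₂, (e₁+e₂)/2, (e₁-e₂)/2). -/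
def EvecList (d : ℕ) : List (Fin d → ℝ) :=
  ((List.finRange d).map (stdVec d)) ++
  ((List.finRange d).flatMap fun i => (List.finRange d).filterMap fun j =>
    if i < j then some (fun k => (stdVec d i k + stdVec d j k) / 2) else none) ++
  ((List.finRange d).flatMap fun i => (List.finRange d).filterMap fun j =>
    if i < j then some (fun k => (stdVec d i k - stdVec d j k) / 2) else none)

/-- The n-th largest value of `u`, counted with multiplicity (1-indexed). -/
def nthLargest {α : Type*} (u : α → NNReal) (n : ℕ) : NNReal :=
  sSup {t | ∃ Ω : Finset α, Ω.card = n ∧ ∀ x ∈ Ω, t ≤ u x}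

/-- The 1-indexed position of the point with doubled coordinate `m` in the
spiral order 0, 1, −1, 2, −2, … (for even m) resp. 1/2, −1/2, 3/2, −3/2, … (for odd m). -/
def posIdx (m : ℤ) : ℕ := (if 0 < m then m else 1 - m).toNat

/-- `x` and `y` lie on a common line with direction `e`. -/
def sameLine {d : ℕ} (e : Fin d → ℝ) (x y : ZLat d) : Prop :=
  ∃ c : ℝ, (fun i => (x i : ℝ) - (y i : ℝ)) = c • e

/-- Twice the inner product ⟨e, x⟩, as an integer. -/
def pairing {d : ℕ} (e : Fin d → ℝ) (x : ZLat d) : ℤ :=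
  ⌊2 * ∑ i, e i * (x i : ℝ)⌋

/-- One-step rearrangement `R_e`. -/
def stepR {d : ℕ} (e : Fin d → ℝ) (u : ZLat d → NNReal) : ZLat d → NNReal :=
  fun x => nthLargest (fun y : {y : ZLat d // sameLine e x y} => u y.1) (posIdx (pairing e x))

/-- `R^k u` : k successive one-step rearrangements cycling through the fixed enumeration. -/
def iterR (d : ℕ) (u : ZLat d → NNReal) : ℕ → ZLat d → NNReal
  | 0 => u
  | k + 1 => stepR ((EvecList d).getD (k % (EvecList d).length) 0) (iterR d u k)

/-- The Schwarz rearrangement on ℤ^d : pointwise limit of `R^k u`. -/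
def RZd (d : ℕ) (u : ZLat d → NNReal) : ZLat d → NNReal :=
  fun x => limUnder atTop fun k => iterR d u k x

def Admissible {α : Type*} (u : α → NNReal) : Prop :=
  ∀ t : NNReal, 0 < t → {x | t < u x}.Finite

def Equimeasurable {α : Type*} (u v : α → NNReal) : Prop :=
  ∀ t : NNReal, 0 < t → Nonempty ({x | t < u x} ≃ {x | t < v x})

/-- Graph distance (ℓ¹ distance) on the lattice ℤ^d. -/
def latDist {d : ℕ} (x y : ZLat d) : ℕ := ∑ i, (x i - y i).natAbs

/-- The i-th standard basis vector of ℤ^d. -/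
def latE {d : ℕ} (i : Fin d) : ZLat d := fun j => if j = i then 1 else 0

/-- ‖∇u‖_p^p : the p-Sobolev energy, summing over each edge {x, x+e_i} once. -/
def gradEnergy (d : ℕ) (p : ℝ) (u : ZLat d → NNReal) : ENNReal :=
  ∑' (x : ZLat d) (i : Fin d), ENNReal.ofReal (|(u (x + latE i) : ℝ) - (u x : ℝ)| ^ p)

/-- ‖∇u‖_p. -/
def gradNorm (d : ℕ) (p : ℝ) (u : ZLat d → NNReal) : ENNReal :=
  gradEnergy d p u ^ (1 / p)

/-- Graph automorphism of the lattice graph ℤ^d. -/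
def IsLatAuto {d : ℕ} (σ : ZLat d ≃ ZLat d) : Prop :=
  ∀ x y : ZLat d, latDist (σ x) (σ y) = 1 ↔ latDist x y = 1

def Supermodular (G : NNReal → NNReal → NNReal) : Prop :=
  ∀ s t s₀ t₀ : NNReal, G (s + s₀) t + G s (t + t₀) ≤ G (s + s₀) (t + t₀) + G s t

def StrictlySupermodular (G : NNReal → NNReal → NNReal) : Prop :=
  ∀ s t s₀ t₀ : NNReal, 0 < s₀ → 0 < t₀ →
    G (s + s₀) t + G s (t + t₀) < G (s + s₀) (t + t₀) + G s t

/-- The values of `u` are strictly decreasing: a₁ > a₂ > a₃ > ⋯ . -/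
def StrictRan {α : Type*} (u : α → NNReal) : Prop :=
  ∀ n : ℕ, 0 < n → nthLargest u (n + 1) < nthLargest u n


theorem lt_nthLargest_iff {α : Type*} {u : α → NNReal} (hu : Admissible u) {n : ℕ} (hn : 0 < n)
    (t : NNReal) : t < nthLargest u n ↔ ∃ Ω : Finset α, Ω.card = n ∧ ∀ x ∈ Ω, t < u x := by
  have hbd : ∃ M, ∀ x, u x ≤ M := by
    have h1 := (hu 1 one_pos).image u
    obtain ⟨M, hM⟩ := h1.bddAbove
    refine ⟨max M 1, fun x => ?_⟩
    by_cases hx : 1 < u x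
    · exact le_max_of_le_left (hM ⟨x, hx, rfl⟩)
    · exact le_max_of_le_right (not_lt.1 hx)
  obtain ⟨M, hM⟩ := hbd
  have hB : BddAbove {t | ∃ Ω : Finset α, Ω.card = n ∧ ∀ x ∈ Ω, t ≤ u x} := by
    refine ⟨M, ?_⟩
    rintro t ⟨Ω, hc, hΩ⟩
    have : Ω.Nonempty := by rw [← Finset.card_pos]; omega
    obtain ⟨x, hx⟩ := this
    exact (hΩ x hx).trans (hM x)
  constructor
  · intro h
    have hne : {t | ∃ Ω : Finset α, Ω.card = n ∧ ∀ x ∈ Ω, t ≤ u x}.Nonempty := by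
      by_contra hne
      rw [Set.not_nonempty_iff_eq_empty] at hne
      unfold nthLargest at h
      rw [hne] at h
      simp at h
    obtain ⟨s, ⟨Ω, hc, hΩ⟩, hs⟩ := exists_lt_of_lt_csSup hne h
    exact ⟨Ω, hc, fun x hx => hs.trans_le (hΩ x hx)⟩
  · rintro ⟨Ω, hc, hΩ⟩
    have hne : Ω.Nonempty := by rw [← Finset.card_pos]; omega
    obtain ⟨z, hz, hmin⟩ := Finset.exists_min_image Ω u hne
    exact (hΩ z hz).trans_le (le_csSup hB ⟨Ω, hc, hmin⟩)

theorem le_nthLargest {α : Type*} {u : α → NNReal} (hu : Admissible u) {n : ℕ} (hn : 0 < n)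
    (t : NNReal) (Ω : Finset α) (hc : Ω.card = n) (hΩ : ∀ x ∈ Ω, t ≤ u x) :
    t ≤ nthLargest u n := by
  refine le_of_forall_lt fun s hs => ?_
  rw [lt_nthLargest_iff hu hn]
  exact ⟨Ω, hc, fun x hx => hs.trans_le (hΩ x hx)⟩

theorem posIdx_pos (m : ℤ) : 0 < posIdx m := by
  unfold posIdx; split_ifs <;> omega

/-- Potential function on the lattice. -/
def pot {d : ℕ} (x : ZLat d) : ℕ :=
  ∑ i : Fin d, (((d : ℤ) + 1) * (x i)^2 - ((d : ℤ) - (i : ℕ)) * x i).toNat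

def cz (c : Bool) : ℤ := if c then 1 else 0

/-- The good side of the mirror. -/
def gd (c : Bool) (m : ℤ) : Prop := if c then m < 1 else 0 < m

/-- reflection -/
def rfx {d : ℕ} (e : Fin d → ℝ) (τ : ZLat d) (c : Bool) (x : ZLat d) : ZLat d :=
  x + (cz c - pairing e x) • τ

structure IsDir {d : ℕ} (e : Fin d → ℝ) (τ : ZLat d) : Prop where
  pair_add : ∀ (x : ZLat d) (k : ℤ), pairing e (x + k • τ) = pairing e x + 2 * k
  line : ∀ x y : ZLat d, sameLine e x y ↔ ∃ k : ℤ, y = x + k • τ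
  isom : ∀ c x y, latDist (rfx e τ c x) (rfx e τ c y) = latDist x y
  side : ∀ c x y, 0 ≤ (pairing e x - cz c) * (pairing e y - cz c) →
    latDist x y ≤ latDist x (rfx e τ c y)
  potlt : ∀ c x, gd c (pairing e x) → pot x < pot (rfx e τ c x)
  far : ∀ c y (n : ℕ), pairing e y ≠ cz c → ∃ x,
    0 < (pairing e x - cz c) * (pairing e y - cz c) ∧ latDist x y ≤ n ∧
      n + 1 ≤ latDist x (rfx e τ c y)

section dir
variable {d : ℕ} {e : Fin d → ℝ} {τ : ZLat d}

theorem pairing_rfx (h : IsDir e τ) (c : Bool) (x : ZLat d) :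
    pairing e (rfx e τ c x) = 2 * cz c - pairing e x := by
  unfold rfx; rw [h.pair_add]; ring

theorem rfx_rfx (h : IsDir e τ) (c : Bool) (x : ZLat d) : rfx e τ c (rfx e τ c x) = x := by
  have := pairing_rfx h c x
  unfold rfx at this ⊢
  rw [this]
  ext i
  simp
  ring

theorem rfx_fix (c : Bool) (x : ZLat d) (hx : pairing e x = cz c) : rfx e τ c x = x := by
  unfold rfx; rw [hx]; simp

theorem line_rfx (h : IsDir e τ) (c : Bool) (x : ZLat d) : sameLine e x (rfx e τ c x) :=
  (h.line _ _).2 ⟨_, rfl⟩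

theorem line_symm (h : IsDir e τ) {x y : ZLat d} (hxy : sameLine e x y) : sameLine e y x := by
  rw [h.line] at *
  obtain ⟨k, rfl⟩ := hxy
  exact ⟨-k, by simp⟩

theorem line_trans (h : IsDir e τ) {x y z : ZLat d} (hxy : sameLine e x y)
    (hyz : sameLine e y z) : sameLine e x z := by
  rw [h.line] at *
  obtain ⟨k, rfl⟩ := hxy
  obtain ⟨l, rfl⟩ := hyz
  exact ⟨k + l, by rw [add_smul, add_assoc]⟩

theorem posIdx_inj (h : IsDir e τ) {x y : ZLat d} (hxy : sameLine e x y)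
    (hp : posIdx (pairing e x) = posIdx (pairing e y)) : x = y := by
  rw [h.line] at hxy
  obtain ⟨k, rfl⟩ := hxy
  rw [h.pair_add] at hp
  have : k = 0 := by
    unfold posIdx at hp
    split_ifs at hp <;> omega
  subst this; simp

theorem gd_dec {c : Bool} {m : ℤ} (h1 : ¬ gd c m) (h2 : m ≠ cz c) : gd c (2 * cz c - m) := by
  cases c <;> simp [gd, cz] at * <;> omega

theorem gd_asym {c : Bool} {m : ℤ} (h1 : gd c m) : ¬ gd c (2 * cz c - m) := by
  cases c <;> simp [gd, cz] at * <;> omega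

theorem gd_ne {c : Bool} {m : ℤ} (h1 : gd c m) : m ≠ cz c := by
  cases c <;> simp [gd, cz] at * <;> omega

theorem gd_posIdx {c : Bool} {m : ℤ} (h1 : ¬ gd c m) (h2 : m ≠ cz c) :
    posIdx (2 * cz c - m) + 1 = posIdx m := by
  cases c <;> simp [gd, cz, posIdx] at * <;> split_ifs <;> omega

open Classical in
/-- polarization of a function -/
def polF (e : Fin d → ℝ) (τ : ZLat d) (c : Bool) (u : ZLat d → NNReal) : ZLat d → NNReal :=
  fun x => if gd c (pairing e x) then max (u x) (u (rfx e τ c x)) else min (u x) (u (rfx e τ c x))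

open Classical in
/-- polarization of a set -/
def polS (e : Fin d → ℝ) (τ : ZLat d) (c : Bool) (A : Set (ZLat d)) : Set (ZLat d) :=
  {x | if gd c (pairing e x) then (x ∈ A ∨ rfx e τ c x ∈ A) else (x ∈ A ∧ rfx e τ c x ∈ A)}

/-- one-step rearrangement of a set -/
def rearS (e : Fin d → ℝ) (A : Set (ZLat d)) : Set (ZLat d) :=
  {x | ∃ Ω : Finset (ZLat d), Ω.card = posIdx (pairing e x) ∧ ∀ y ∈ Ω, sameLine e x y ∧ y ∈ A}

theorem polF_level (c : Bool) (u : ZLat d → NNReal) (t : NNReal) :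
    {x | t < polF e τ c u x} = polS e τ c {x | t < u x} := by
  ext x
  simp only [polF, polS, Set.mem_ofPred_eq]
  split_ifs <;> simp

theorem stepR_level (e : Fin d → ℝ) {u : ZLat d → NNReal} (hu : Admissible u) (t : NNReal) :
    {x | t < stepR e u x} = rearS e {x | t < u x} := by
  classical
  ext x
  simp only [stepR, rearS, Set.mem_ofPred_eq]
  have hu' : Admissible (fun y : {y : ZLat d // sameLine e x y} => u y.1) := by
    intro t ht
    have := Set.Finite.preimage (f := fun y : {y : ZLat d // sameLine e x y} => y.1)
      (Subtype.val_injective.injOn) (hu t ht)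
    exact this
  rw [lt_nthLargest_iff hu' (posIdx_pos _)]
  constructor
  · rintro ⟨Ω, hc, hΩ⟩
    refine ⟨Ω.map (Function.Embedding.subtype _), by simpa using hc, ?_⟩
    intro y hy
    simp only [Finset.mem_map, Function.Embedding.subtype_apply] at hy
    obtain ⟨z, hz, rfl⟩ := hy
    exact ⟨z.2, hΩ z hz⟩
  · rintro ⟨Ω, hc, hΩ⟩
    refine ⟨Ω.subtype _, ?_, ?_⟩
    · rw [Finset.card_subtype, Finset.filter_true_of_mem (fun y hy => (hΩ y hy).1)]
      exact hc
    · intro y hy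
      exact (hΩ _ (Finset.mem_subtype.1 hy)).2

open Classical in
/-- the bijection from `A` to its polarization -/
def polMap (e : Fin d → ℝ) (τ : ZLat d) (c : Bool) (A : Set (ZLat d)) (x : ZLat d) : ZLat d :=
  if x ∈ polS e τ c A then x else rfx e τ c x

theorem polMap_line (h : IsDir e τ) (c : Bool) (A : Set (ZLat d)) (x : ZLat d) :
    sameLine e x (polMap e τ c A x) := by
  unfold polMap
  split_ifs
  · exact (h.line _ _).2 ⟨0, by simp⟩
  · exact line_rfx h c x

theorem mem_polS_fix (_h : IsDir e τ) (c : Bool) (A : Set (ZLat d)) (x : ZLat d)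
    (hx : pairing e x = cz c) : x ∈ polS e τ c A ↔ x ∈ A := by
  have := rfx_fix (τ := τ) c x hx
  simp [polS, this]

theorem not_mem_polS (h : IsDir e τ) (c : Bool) {A : Set (ZLat d)} {x : ZLat d}
    (hx : x ∈ A) (hx' : x ∉ polS e τ c A) :
    ¬ gd c (pairing e x) ∧ gd c (pairing e (rfx e τ c x)) ∧ rfx e τ c x ∉ A ∧
      rfx e τ c x ∈ polS e τ c A := by
  have h1 : ¬ gd c (pairing e x) := by
    intro hg; apply hx'; simp [polS, hg, hx]
  have h2 : pairing e x ≠ cz c := by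
    intro hg; exact hx' ((mem_polS_fix h c A x hg).2 hx)
  have h3 : gd c (pairing e (rfx e τ c x)) := by
    rw [pairing_rfx h]; exact gd_dec h1 h2
  have h4 : rfx e τ c x ∉ A := by
    intro hg; apply hx'; simp [polS, h1, hx, hg]
  refine ⟨h1, h3, h4, ?_⟩
  simp [polS, h3, rfx_rfx h, hx]

theorem polMap_mem (h : IsDir e τ) (c : Bool) {A : Set (ZLat d)} {x : ZLat d} (hx : x ∈ A) :
    polMap e τ c A x ∈ polS e τ c A := by
  unfold polMap
  split_ifs with h1
  · exact h1
  · exact (not_mem_polS h c hx h1).2.2.2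

theorem polMap_inj (h : IsDir e τ) (c : Bool) (A : Set (ZLat d)) :
    Set.InjOn (polMap e τ c A) A := by
  intro x hx y hy hxy
  unfold polMap at hxy
  split_ifs at hxy with h1 h2 h2
  · exact hxy
  · have := (not_mem_polS h c hy h2).2.2.1
    rw [← hxy] at this; exact absurd hx this
  · have := (not_mem_polS h c hx h1).2.2.1
    rw [hxy] at this; exact absurd hy this
  · rw [← rfx_rfx h c x, hxy, rfx_rfx h]

theorem mem_polS_not (h : IsDir e τ) (c : Bool) {A : Set (ZLat d)} {x : ZLat d}
    (hx : x ∈ polS e τ c A) (hx' : x ∉ A) :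
    rfx e τ c x ∈ A ∧ rfx e τ c x ∉ polS e τ c A := by
  have h1 : gd c (pairing e x) := by
    by_contra hg; simp [polS, hg, hx'] at hx
  have h2 : rfx e τ c x ∈ A := by
    simpa [polS, h1, hx'] using hx
  refine ⟨h2, ?_⟩
  have h3 : ¬ gd c (pairing e (rfx e τ c x)) := by rw [pairing_rfx h]; exact gd_asym h1
  simp [polS, h3, rfx_rfx h, hx']

theorem polMap_surj (h : IsDir e τ) (c : Bool) {A : Set (ZLat d)} {x : ZLat d}
    (hx : x ∈ polS e τ c A) : ∃ y ∈ A, polMap e τ c A y = x := by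
  by_cases hxA : x ∈ A
  · exact ⟨x, hxA, by simp [polMap, hx]⟩
  · obtain ⟨h1, h2⟩ := mem_polS_not h c hx hxA
    exact ⟨_, h1, by simp [polMap, h2, rfx_rfx h]⟩

theorem rearS_polS (h : IsDir e τ) (c : Bool) (A : Set (ZLat d)) :
    rearS e (polS e τ c A) = rearS e A := by
  classical
  ext x
  constructor
  · rintro ⟨Ω, hc, hΩ⟩
    have : ∀ y ∈ Ω, ∃ z ∈ A, polMap e τ c A z = y := fun y hy => polMap_surj h c (hΩ y hy).2
    choose! g hg hg' using this
    refine ⟨Ω.image g, ?_, ?_⟩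
    · rw [Finset.card_image_of_injOn, hc]
      intro y hy z hz hyz
      rw [← hg' y hy, ← hg' z hz, hyz]
    · intro y hy
      obtain ⟨z, hz, rfl⟩ := Finset.mem_image.1 hy
      refine ⟨?_, hg z hz⟩
      refine line_trans h (hΩ z hz).1 ?_
      have := polMap_line h c A (g z)
      rw [hg' z hz] at this
      exact line_symm h this
  · rintro ⟨Ω, hc, hΩ⟩
    refine ⟨Ω.image (polMap e τ c A), ?_, ?_⟩
    · rw [Finset.card_image_of_injOn, hc]
      exact (polMap_inj h c A).mono (fun y hy => (hΩ y hy).2)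
    · intro y hy
      obtain ⟨z, hz, rfl⟩ := Finset.mem_image.1 hy
      exact ⟨line_trans h (hΩ z hz).1 (polMap_line h c A z), polMap_mem h c (hΩ z hz).2⟩

theorem polS_desc (h : IsDir e τ) {B : Set (ZLat d)} (hB : ∀ c, polS e τ c B = B) (q : ℕ) :
    ∀ (n : ℕ) (y : ZLat d), y ∈ B → 0 < q → posIdx (pairing e y) = q + n →
      ∃ z ∈ B, sameLine e y z ∧ posIdx (pairing e z) = q := by
  intro n
  induction n with
  | zero => intro y hy _ hp; exact ⟨y, hy, (h.line _ _).2 ⟨0, by simp⟩, hp⟩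
  | succ n ih =>
    intro y hy hq hp
    have : ∃ c, ¬ gd c (pairing e y) ∧ pairing e y ≠ cz c := by
      by_cases hm : 0 < pairing e y
      · refine ⟨true, ?_⟩
        simp [posIdx, hm] at hp
        simp [gd, cz]; omega
      · refine ⟨false, ?_⟩
        simp [posIdx, hm] at hp
        simp [gd, cz]; omega
    obtain ⟨c, h1, h2⟩ := this
    have h3 : rfx e τ c y ∈ B := by
      have hy' := hy
      rw [← hB c] at hy'
      simp [polS, h1] at hy'
      exact hy'.2
    have h4 := gd_posIdx h1 h2
    obtain ⟨z, hz, hl, hzq⟩ := ih (rfx e τ c y) h3 hq (by rw [pairing_rfx h]; omega)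
    exact ⟨z, hz, line_trans h (line_rfx h c y) hl, hzq⟩

theorem rearS_of_fix (h : IsDir e τ) {B : Set (ZLat d)} (hB : ∀ c, polS e τ c B = B) :
    rearS e B = B := by
  classical
  ext x
  constructor
  · rintro ⟨Ω, hc, hΩ⟩
    have hinj : Set.InjOn (fun y => posIdx (pairing e y)) (Ω : Set (ZLat d)) := by
      intro y hy z hz hyz
      exact posIdx_inj h (line_trans h (line_symm h (hΩ y hy).1) (hΩ z hz).1) hyz
    have : ∃ y ∈ Ω, posIdx (pairing e x) ≤ posIdx (pairing e y) := by
      by_contra hcon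
      push Not at hcon
      have hsub : Ω.image (fun y => posIdx (pairing e y)) ⊆
          Finset.Ico 1 (posIdx (pairing e x)) := by
        intro k hk
        obtain ⟨y, hy, rfl⟩ := Finset.mem_image.1 hk
        rw [Finset.mem_Ico]
        exact ⟨posIdx_pos _, hcon y hy⟩
      have h1 := Finset.card_le_card hsub
      rw [Finset.card_image_of_injOn hinj, Nat.card_Ico, hc] at h1
      have := posIdx_pos (pairing e x)
      omega
    obtain ⟨y, hy, hle⟩ := this
    obtain ⟨z, hz, hl, hq⟩ := polS_desc h hB (posIdx (pairing e x))
      (posIdx (pairing e y) - posIdx (pairing e x)) y (hΩ y hy).2 (posIdx_pos _) (by omega)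
    have : x = z := posIdx_inj h (line_trans h (hΩ y hy).1 hl) hq.symm
    rw [this]; exact hz
  · intro hx
    have : ∀ q ∈ Finset.Icc 1 (posIdx (pairing e x)),
        ∃ z ∈ B, sameLine e x z ∧ posIdx (pairing e z) = q := by
      intro q hq
      rw [Finset.mem_Icc] at hq
      exact polS_desc h hB q (posIdx (pairing e x) - q) x hx (by omega) (by omega)
    choose! g hg1 hg2 hg3 using this
    refine ⟨(Finset.Icc 1 (posIdx (pairing e x))).image g, ?_, ?_⟩
    · rw [Finset.card_image_of_injOn]
      · simp
      · intro a ha b hb hab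
        rw [← hg3 a ha, ← hg3 b hb, hab]
    · intro y hy
      obtain ⟨q, hq, rfl⟩ := Finset.mem_image.1 hy
      exact ⟨hg2 q hq, hg1 q hq⟩

theorem polS_rearS (h : IsDir e τ) (c : Bool) (A : Set (ZLat d)) :
    polS e τ c (rearS e A) = rearS e A := by
  have key : ∀ x, ¬ gd c (pairing e x) → x ∈ rearS e A → rfx e τ c x ∈ rearS e A := by
    intro x hx ⟨Ω, hc, hΩ⟩
    by_cases h2 : pairing e x = cz c
    · rw [rfx_fix c x h2]; exact ⟨Ω, hc, hΩ⟩
    have h4 := gd_posIdx hx h2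
    rw [← pairing_rfx h] at h4
    obtain ⟨Ω', hs, hc'⟩ := Finset.exists_subset_card_eq
      (show posIdx (pairing e (rfx e τ c x)) ≤ Ω.card by omega)
    refine ⟨Ω', hc', fun y hy => ⟨?_, (hΩ y (hs hy)).2⟩⟩
    exact line_trans h (line_symm h (line_rfx h c x)) (hΩ y (hs hy)).1
  ext x
  by_cases hg : gd c (pairing e x)
  · simp only [polS, Set.mem_ofPred_eq, hg, if_true]
    constructor
    · rintro (hx | hx)
      · exact hx
      · have := key _ (by rw [pairing_rfx h]; exact gd_asym hg) hx
        rwa [rfx_rfx h] at this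
    · exact Or.inl
  · simp only [polS, Set.mem_ofPred_eq, hg, if_false]
    exact ⟨fun hx => hx.1, fun hx => ⟨hx, key x hg hx⟩⟩

end dir

/-- total potential of a set -/
def sp {d : ℕ} (A : Set (ZLat d)) : ℕ := ∑ᶠ x ∈ A, pot x

/-- `B` improves on `A` -/
def Impr {d : ℕ} (A B : Set (ZLat d)) : Prop :=
  A.Finite → B.Finite ∧ sp B ≤ sp A ∧ (sp B = sp A → B = A)

theorem Impr.refl {d : ℕ} (A : Set (ZLat d)) : Impr A A := fun h => ⟨h, le_rfl, fun _ => rfl⟩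

theorem Impr.trans {d : ℕ} {A B C : Set (ZLat d)} (h1 : Impr A B) (h2 : Impr B C) : Impr A C := by
  intro hA
  obtain ⟨hB, hle, heq⟩ := h1 hA
  obtain ⟨hC, hle', heq'⟩ := h2 hB
  refine ⟨hC, hle'.trans hle, fun h => ?_⟩
  have e1 : sp C = sp B := by omega
  have e2 : sp B = sp A := by omega
  rw [heq' e1, heq e2]

/-- iteration of set operators -/
def itS {d : ℕ} (ρ : ℕ → Set (ZLat d) → Set (ZLat d)) (A : Set (ZLat d)) : ℕ → Set (ZLat d)
  | 0 => A
  | k + 1 => ρ k (itS ρ A k)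

theorem itS_impr {d : ℕ} {ρ : ℕ → Set (ZLat d) → Set (ZLat d)} (hρ : ∀ k A, Impr A (ρ k A))
    (A : Set (ZLat d)) (k : ℕ) : Impr A (itS ρ A k) := by
  induction k with
  | zero => exact Impr.refl A
  | succ k ih => exact ih.trans (hρ _ _)

theorem itS_stab {d : ℕ} {ρ : ℕ → Set (ZLat d) → Set (ZLat d)} (hρ : ∀ k A, Impr A (ρ k A))
    {A : Set (ZLat d)} (hA : A.Finite) : ∃ N, ∀ k, N ≤ k → itS ρ A k = itS ρ A N := by
  obtain ⟨N, hN⟩ : ∃ N, ∀ k, sp (itS ρ A N) ≤ sp (itS ρ A k) := by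
    let S : Set ℕ := Set.range fun k => sp (itS ρ A k)
    have hS : S.Nonempty := Set.range_nonempty _
    obtain ⟨N, hN⟩ := Nat.sInf_mem hS
    refine ⟨N, fun k => ?_⟩
    simp only at hN
    rw [hN]
    exact Nat.sInf_le ⟨k, rfl⟩
  refine ⟨N, fun k hk => ?_⟩
  induction k, hk using Nat.le_induction with
  | base => rfl
  | succ k hk ih =>
    obtain ⟨h1, h2, h3⟩ := hρ k (itS ρ A k) (itS_impr hρ A k hA).1
    have h4 := hN (k + 1)
    rw [← ih] at h4 ⊢
    exact h3 (le_antisymm h2 h4)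

theorem itS_stab_unif {d : ℕ} {ρ : ℕ → Set (ZLat d) → Set (ZLat d)}
    (hρ : ∀ k A, Impr A (ρ k A))
    {S : Set (ZLat d)} (hS : S.Finite) :
    ∃ N, ∀ A ⊆ S, ∀ k, N ≤ k → itS ρ A k = itS ρ A N := by
  have : ∀ A : Set (ZLat d), ∃ N, A ⊆ S → ∀ k, N ≤ k → itS ρ A k = itS ρ A N := by
    intro A
    by_cases hA : A ⊆ S
    · obtain ⟨N, hN⟩ := itS_stab hρ (hS.subset hA)
      exact ⟨N, fun _ => hN⟩
    · exact ⟨0, fun h => absurd h hA⟩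
  choose N hN using this
  obtain ⟨M, hM⟩ := (hS.finite_subsets.image N).bddAbove
  refine ⟨M, fun A hA k hk => ?_⟩
  have h1 : N A ≤ M := hM ⟨A, hA, rfl⟩
  rw [hN A hA k (h1.trans hk), hN A hA M h1]

section dir2
variable {d : ℕ} {e : Fin d → ℝ} {τ : ZLat d}

theorem polS_impr (h : IsDir e τ) (c : Bool) (A : Set (ZLat d)) : Impr A (polS e τ c A) := by
  intro hA
  have him : polS e τ c A = polMap e τ c A '' A := by
    ext x
    constructor
    · intro hx
      obtain ⟨y, hy, hyx⟩ := polMap_surj h c hx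
      exact ⟨y, hy, hyx⟩
    · rintro ⟨y, hy, rfl⟩
      exact polMap_mem h c hy
  have hpot : ∀ x ∈ A, pot (polMap e τ c A x) ≤ pot x ∧
      (polMap e τ c A x ≠ x → pot (polMap e τ c A x) < pot x) := by
    intro x hx
    by_cases hx' : x ∈ polS e τ c A
    · simp [polMap, hx']
    · have := h.potlt c (rfx e τ c x) (not_mem_polS h c hx hx').2.1
      rw [rfx_rfx h] at this
      simp only [polMap, hx', if_false]
      exact ⟨this.le, fun _ => this⟩
  have hs : sp (polS e τ c A) = ∑ x ∈ hA.toFinset, pot (polMap e τ c A x) := by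
    unfold sp
    rw [him, finsum_mem_image (polMap_inj h c A), finsum_mem_eq_finite_toFinset_sum _ hA]
  have hs' : sp A = ∑ x ∈ hA.toFinset, pot x := by
    unfold sp
    rw [finsum_mem_eq_finite_toFinset_sum _ hA]
  refine ⟨him ▸ hA.image _, ?_, ?_⟩
  · rw [hs, hs']
    exact Finset.sum_le_sum fun x hx => (hpot x (by simpa using hx)).1
  · rw [hs, hs']
    intro heq
    have hall : ∀ x ∈ A, polMap e τ c A x = x := by
      intro x hx
      by_contra hne
      have : ∑ x ∈ hA.toFinset, pot (polMap e τ c A x) < ∑ x ∈ hA.toFinset, pot x :=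
        Finset.sum_lt_sum (fun x hx => (hpot x (by simpa using hx)).1)
          ⟨x, by simpa using hx, (hpot x hx).2 hne⟩
      omega
    rw [him]
    ext x
    constructor
    · rintro ⟨y, hy, rfl⟩
      rw [hall y hy]; exact hy
    · intro hx; exact ⟨x, hx, hall x hx⟩

/-- alternating choice of mirrors -/
def altc (k : ℕ) : Bool := decide (k % 2 = 1)

theorem itS_pol_rear (h : IsDir e τ) {A : Set (ZLat d)} (N : ℕ)
    (hN : ∀ k, N ≤ k → itS (fun k => polS e τ (altc k)) A k = itS (fun k => polS e τ (altc k)) A N) :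
    itS (fun k => polS e τ (altc k)) A N = rearS e A := by
  have hrear : ∀ k, rearS e (itS (fun k => polS e τ (altc k)) A k) = rearS e A := by
    intro k
    induction k with
    | zero => rfl
    | succ k ih => rw [← ih]; exact rearS_polS h _ _
  have h0 : ∀ k, N ≤ k → polS e τ (altc k) (itS (fun k => polS e τ (altc k)) A N) =
      itS (fun k => polS e τ (altc k)) A N := by
    intro k hk
    have := hN (k + 1) (by omega)
    rw [← hN k hk]
    rw [← hN k hk] at this
    exact this
  have hfix : ∀ c, polS e τ c (itS (fun k => polS e τ (altc k)) A N) =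
      itS (fun k => polS e τ (altc k)) A N := by
    intro c
    cases c with
    | false =>
      have := h0 (2 * N) (by omega)
      have h2 : altc (2 * N) = false := by simp [altc]
      rwa [h2] at this
    | true =>
      have := h0 (2 * N + 1) (by omega)
      have h2 : altc (2 * N + 1) = true := by simp [altc]
      rwa [h2] at this
  rw [← hrear N, rearS_of_fix h hfix]

theorem rearS_impr (h : IsDir e τ) (A : Set (ZLat d)) : Impr A (rearS e A) := by
  intro hA
  have hρ : ∀ (k : ℕ) (A : Set (ZLat d)), Impr A (polS e τ (altc k) A) := fun k A => polS_impr h _ A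
  obtain ⟨N, hN⟩ := itS_stab hρ hA
  rw [← itS_pol_rear h N hN]
  exact itS_impr hρ A N hA

theorem level_ext {α : Type*} {f g : α → NNReal} (h : ∀ t, {x | t < f x} = {x | t < g x}) :
    f = g := by
  funext x
  refine eq_of_forall_lt_iff fun t => ?_
  have := h t
  rw [Set.ext_iff] at this
  exact this x

/-- truncation -/
def trunc {α : Type*} (t : NNReal) (u : α → NNReal) : α → NNReal := fun x => if t < u x then u x else 0

theorem trunc_level {α : Type*} (t s : NNReal) (u : α → NNReal) :
    {x | s < trunc t u x} = {x | max s t < u x} := by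
  ext x
  simp only [trunc, Set.mem_ofPred_eq, max_lt_iff]
  split_ifs with h <;> simp [h]

theorem trunc_adm {α : Type*} (t : NNReal) {u : α → NNReal} (hu : Admissible u) :
    Admissible (trunc t u) := by
  intro s hs
  rw [trunc_level]
  exact hu _ (lt_max_of_lt_left hs)

theorem stepR_adm (h : IsDir e τ) {u : ZLat d → NNReal} (hu : Admissible u) :
    Admissible (stepR e u) := by
  intro t ht
  rw [stepR_level e hu]
  exact (rearS_impr h _ (hu t ht)).1

theorem polF_adm (h : IsDir e τ) (c : Bool) {u : ZLat d → NNReal} (hu : Admissible u) :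
    Admissible (polF e τ c u) := by
  intro t ht
  rw [polF_level]
  exact (polS_impr h c _ (hu t ht)).1

theorem stepR_trunc (e : Fin d → ℝ) (t : NNReal) {u : ZLat d → NNReal} (hu : Admissible u) :
    stepR e (trunc t u) = trunc t (stepR e u) := by
  apply level_ext
  intro s
  rw [stepR_level e (trunc_adm t hu), trunc_level, trunc_level, stepR_level e hu]

theorem stepR_polF (h : IsDir e τ) (c : Bool) {u : ZLat d → NNReal} (hu : Admissible u) :
    stepR e (polF e τ c u) = stepR e u := by
  apply level_ext
  intro s
  rw [stepR_level e (polF_adm h c hu), stepR_level e hu, polF_level, rearS_polS h]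

theorem stepR_of_fix (h : IsDir e τ) {u : ZLat d → NNReal} (hu : Admissible u)
    (hf : ∀ c, polF e τ c u = u) : stepR e u = u := by
  apply level_ext
  intro s
  rw [stepR_level e hu]
  apply rearS_of_fix h
  intro c
  rw [← polF_level, hf c]

theorem polF_stepR (h : IsDir e τ) (c : Bool) {u : ZLat d → NNReal} (hu : Admissible u) :
    polF e τ c (stepR e u) = stepR e u := by
  apply level_ext
  intro s
  rw [polF_level, stepR_level e hu, polS_rearS h]

/-- iterated polarization of functions -/
def itP (e : Fin d → ℝ) (τ : ZLat d) (u : ZLat d → NNReal) : ℕ → ZLat d → NNReal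
  | 0 => u
  | k + 1 => polF e τ (altc k) (itP e τ u k)

theorem itP_level (u : ZLat d → NNReal) (t : NNReal) (k : ℕ) :
    {x | t < itP e τ u k x} = itS (fun k => polS e τ (altc k)) {x | t < u x} k := by
  induction k with
  | zero => rfl
  | succ k ih =>
    simp only [itP, itS]
    rw [polF_level, ih]

theorem itP_stepR (h : IsDir e τ) {u : ZLat d → NNReal} (hu : Admissible u)
    (hfin : {x | 0 < u x}.Finite) : ∃ N, ∀ k, N ≤ k → itP e τ u k = stepR e u := by
  have hρ : ∀ (k : ℕ) (A : Set (ZLat d)), Impr A (polS e τ (altc k) A) := fun k A => polS_impr h _ A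
  obtain ⟨N, hN⟩ := itS_stab_unif hρ hfin
  refine ⟨N, fun k hk => ?_⟩
  apply level_ext
  intro t
  have hsub : {x | t < u x} ⊆ {x | 0 < u x} := by
    intro x hx
    have hx' : t < u x := hx
    exact pos_of_gt hx'
  rw [itP_level, stepR_level e hu, hN _ hsub k hk]
  exact itS_pol_rear h N (hN _ hsub)

end dir2

/-- the Riesz functional -/
def En {d : ℕ} (G : NNReal → NNReal → NNReal) (H : NNReal → NNReal) (u v : ZLat d → NNReal) :
    ENNReal :=
  ∑' (x : ZLat d) (y : ZLat d), ((G (u x) (v y) * H (latDist x y) : NNReal) : ENNReal)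

theorem supermod_cross {G : NNReal → NNReal → NNReal} (hG : Supermodular G) {M m N n : NNReal}
    (h1 : m ≤ M) (h2 : n ≤ N) : G M n + G m N ≤ G M N + G m n := by
  have := hG m n (M - m) (N - n)
  rwa [add_tsub_cancel_of_le h1, add_tsub_cancel_of_le h2] at this

theorem strict_cross {G : NNReal → NNReal → NNReal} (hG : StrictlySupermodular G)
    {M m N n : NNReal}
    (h1 : m < M) (h2 : n < N) : G M n + G m N < G M N + G m n := by
  have := hG m n (M - m) (N - n) (tsub_pos_of_lt h1) (tsub_pos_of_lt h2)
  rwa [add_tsub_cancel_of_le h1.le, add_tsub_cancel_of_le h2.le] at this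

theorem arith1 {A B p q r s : NNReal} (hAB : B ≤ A) (h : p + q ≤ r + s) :
    A * p + A * q + (B * r + B * s) ≤ A * r + A * s + (B * p + B * q) := by
  have h1 : (B : ℝ) ≤ A := hAB
  have h2 : (p : ℝ) + q ≤ r + s := by exact_mod_cast h
  have : (A : ℝ) * p + A * q + (B * r + B * s) ≤ A * r + A * s + (B * p + B * q) := by
    nlinarith
  exact_mod_cast this

theorem arith2 {A B p q r s : NNReal} (hAB : B < A) (h : p + q < r + s) :
    A * p + A * q + (B * r + B * s) < A * r + A * s + (B * p + B * q) := by
  have h1 : (B : ℝ) < A := hAB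
  have h2 : (p : ℝ) + q < r + s := by exact_mod_cast h
  have : (A : ℝ) * p + A * q + (B * r + B * s) < A * r + A * s + (B * p + B * q) := by
    nlinarith
  exact_mod_cast this

/-- four point inequality, with the large value first in both slots -/
theorem four_same {G : NNReal → NNReal → NNReal} (hG : Supermodular G) {A B : NNReal}
    (hAB : B ≤ A) (a a' b b' : NNReal) :
    G a b * A + G a' b * B + (G a b' * B + G a' b' * A) ≤
      G (max a a') (max b b') * A + G (min a a') (max b b') * B +
        (G (max a a') (min b b') * B + G (min a a') (min b b') * A) := by
  rcases le_total a a' with h1 | h1 <;> rcases le_total b b' with h2 | h2 <;>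
    simp only [max_eq_left h1, max_eq_right h1, min_eq_left h1, min_eq_right h1,
      max_eq_left h2, max_eq_right h2, min_eq_left h2, min_eq_right h2]
  · exact le_of_eq (by ring)
  · have := arith1 hAB (supermod_cross hG h1 h2)
    linarith
  · have := arith1 hAB (supermod_cross hG h1 h2)
    linarith
  · exact le_rfl

section dir3
variable {d : ℕ} {e : Fin d → ℝ} {τ : ZLat d}

/-- four-point sum -/
def quad (e : Fin d → ℝ) (τ : ZLat d) (c : Bool) (G : NNReal → NNReal → NNReal)
    (H : NNReal → NNReal) (u v : ZLat d → NNReal) (x y : ZLat d) : NNReal :=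
  G (u x) (v y) * H (latDist x y) +
  G (u (rfx e τ c x)) (v y) * H (latDist (rfx e τ c x) y) +
  (G (u x) (v (rfx e τ c y)) * H (latDist x (rfx e τ c y)) +
  G (u (rfx e τ c x)) (v (rfx e τ c y)) * H (latDist (rfx e τ c x) (rfx e τ c y)))

/-- reflection as an equivalence -/
def rfxE (h : IsDir e τ) (c : Bool) : ZLat d ≃ ZLat d where
  toFun := rfx e τ c
  invFun := rfx e τ c
  left_inv := rfx_rfx h c
  right_inv := rfx_rfx h c

theorem four_En (h : IsDir e τ) (c : Bool) (G : NNReal → NNReal → NNReal)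
    (H : NNReal → NNReal) (u v : ZLat d → NNReal) :
    ∑' (x : ZLat d) (y : ZLat d), ((quad e τ c G H u v x y : NNReal) : ENNReal) =
      4 * En G H u v := by
  let K : ZLat d → ZLat d → ENNReal :=
    fun x y => ((G (u x) (v y) * H (latDist x y) : NNReal) : ENNReal)
  have e0 : En G H u v = ∑' x, ∑' y, K x y := rfl
  have e1 : ∑' x, ∑' y, K (rfx e τ c x) y = ∑' x, ∑' y, K x y :=
    (rfxE h c).tsum_eq (fun x => ∑' y, K x y)
  have e2 : ∀ x, ∑' y, K x (rfx e τ c y) = ∑' y, K x y := fun x =>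
    (rfxE h c).tsum_eq (fun y => K x y)
  have : ∀ x y, ((quad e τ c G H u v x y : NNReal) : ENNReal) =
      K x y + K (rfx e τ c x) y + (K x (rfx e τ c y) + K (rfx e τ c x) (rfx e τ c y)) := by
    intro x y
    simp only [K, quad, ENNReal.coe_add]
  simp_rw [this, ENNReal.tsum_add, e2, e1, ← e0]
  ring

theorem dist_swap (h : IsDir e τ) (c : Bool) (x y : ZLat d) :
    latDist (rfx e τ c x) y = latDist x (rfx e τ c y) := by
  have := h.isom c x (rfx e τ c y)
  rwa [rfx_rfx h] at this

theorem polF_good (h : IsDir e τ) {c : Bool} (u : ZLat d → NNReal) {x : ZLat d}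
    (hx : gd c (pairing e x)) : polF e τ c u x = max (u x) (u (rfx e τ c x)) ∧
      polF e τ c u (rfx e τ c x) = min (u x) (u (rfx e τ c x)) := by
  have h2 : ¬ gd c (pairing e (rfx e τ c x)) := by rw [pairing_rfx h]; exact gd_asym hx
  constructor
  · simp [polF, hx]
  · simp [polF, h2, rfx_rfx h, min_comm]

theorem polF_fix {c : Bool} (u : ZLat d → NNReal) {x : ZLat d}
    (hx : pairing e x = cz c) : polF e τ c u x = u x := by
  simp [polF, rfx_fix c x hx]

theorem quad_good (h : IsDir e τ) {c : Bool} {G : NNReal → NNReal → NNReal}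
    (hG : Supermodular G) {H : NNReal → NNReal} (hH : Antitone H) (u v : ZLat d → NNReal)
    {x y : ZLat d} (hx : gd c (pairing e x)) (hy : gd c (pairing e y)) :
    quad e τ c G H u v x y ≤ quad e τ c G H (polF e τ c u) (polF e τ c v) x y := by
  unfold quad
  rw [(polF_good h u hx).1, (polF_good h u hx).2, (polF_good h v hy).1, (polF_good h v hy).2,
    dist_swap h, h.isom]
  apply four_same hG
  apply hH
  have : latDist x y ≤ latDist x (rfx e τ c y) := by
    apply h.side
    cases c <;> simp [gd, cz] at * <;> nlinarith
  exact_mod_cast this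

theorem quad_swap1 (h : IsDir e τ) (c : Bool) (G : NNReal → NNReal → NNReal)
    (H : NNReal → NNReal) (u v : ZLat d → NNReal) (x y : ZLat d) :
    quad e τ c G H u v (rfx e τ c x) y = quad e τ c G H u v x y := by
  unfold quad; rw [rfx_rfx h]; ring

theorem quad_swap2 (h : IsDir e τ) (c : Bool) (G : NNReal → NNReal → NNReal)
    (H : NNReal → NNReal) (u v : ZLat d → NNReal) (x y : ZLat d) :
    quad e τ c G H u v x (rfx e τ c y) = quad e τ c G H u v x y := by
  unfold quad; rw [rfx_rfx h]; ring

theorem gd_cases (h : IsDir e τ) (c : Bool) (x : ZLat d) :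
    pairing e x = cz c ∨ gd c (pairing e x) ∨ gd c (pairing e (rfx e τ c x)) := by
  by_cases h1 : pairing e x = cz c
  · exact Or.inl h1
  by_cases h2 : gd c (pairing e x)
  · exact Or.inr (Or.inl h2)
  · right; right; rw [pairing_rfx h]; exact gd_dec h2 h1

theorem quad_fix1 (h : IsDir e τ) (c : Bool) (G : NNReal → NNReal → NNReal)
    (H : NNReal → NNReal) (u v : ZLat d → NNReal) (x y : ZLat d) (hx : pairing e x = cz c) :
    quad e τ c G H (polF e τ c u) (polF e τ c v) x y = quad e τ c G H u v x y := by
  have hd : latDist x (rfx e τ c y) = latDist x y := by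
    rw [← dist_swap h, rfx_fix c x hx]
  rcases gd_cases h c y with hy | hy | hy
  · unfold quad; rw [rfx_fix c x hx, rfx_fix c y hy, polF_fix u hx, polF_fix v hy]
  · unfold quad
    rw [rfx_fix c x hx, polF_fix u hx, (polF_good h v hy).1, (polF_good h v hy).2, hd]
    rcases le_total (v y) (v (rfx e τ c y)) with h1 | h1
    · rw [max_eq_right h1, min_eq_left h1]; ring
    · rw [max_eq_left h1, min_eq_right h1]
  · unfold quad
    have h3 := polF_good h v hy
    rw [rfx_rfx h] at h3
    rw [rfx_fix c x hx, polF_fix u hx, h3.1, h3.2, hd]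
    rcases le_total (v y) (v (rfx e τ c y)) with h1 | h1
    · rw [max_eq_left h1, min_eq_right h1]
    · rw [max_eq_right h1, min_eq_left h1]; ring

theorem quad_fix2 (h : IsDir e τ) (c : Bool) (G : NNReal → NNReal → NNReal)
    (H : NNReal → NNReal) (u v : ZLat d → NNReal) (x y : ZLat d) (hy : pairing e y = cz c) :
    quad e τ c G H (polF e τ c u) (polF e τ c v) x y = quad e τ c G H u v x y := by
  have hd : latDist (rfx e τ c x) y = latDist x y := by
    rw [dist_swap h, rfx_fix c y hy]
  rcases gd_cases h c x with hx | hx | hx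
  · unfold quad; rw [rfx_fix c x hx, rfx_fix c y hy, polF_fix u hx, polF_fix v hy]
  · unfold quad
    rw [rfx_fix c y hy, polF_fix v hy, (polF_good h u hx).1, (polF_good h u hx).2, hd]
    rcases le_total (u x) (u (rfx e τ c x)) with h1 | h1
    · rw [max_eq_right h1, min_eq_left h1]; ring
    · rw [max_eq_left h1, min_eq_right h1]
  · unfold quad
    have h3 := polF_good h u hx
    rw [rfx_rfx h] at h3
    rw [rfx_fix c y hy, polF_fix v hy, h3.1, h3.2, hd]
    rcases le_total (u x) (u (rfx e τ c x)) with h1 | h1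
    · rw [max_eq_left h1, min_eq_right h1]
    · rw [max_eq_right h1, min_eq_left h1]; ring

theorem quad_le (h : IsDir e τ) {c : Bool} {G : NNReal → NNReal → NNReal}
    (hG : Supermodular G) {H : NNReal → NNReal} (hH : Antitone H) (u v : ZLat d → NNReal)
    (x y : ZLat d) :
    quad e τ c G H u v x y ≤ quad e τ c G H (polF e τ c u) (polF e τ c v) x y := by
  rcases gd_cases h c x with hx | hx | hx
  · exact (quad_fix1 h c G H u v x y hx).ge
  · rcases gd_cases h c y with hy | hy | hy
    · exact (quad_fix2 h c G H u v x y hy).ge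
    · exact quad_good h hG hH u v hx hy
    · rw [← quad_swap2 h c G H u v x y, ← quad_swap2 h c G H _ _ x y]
      exact quad_good h hG hH u v hx hy
  · rw [← quad_swap1 h c G H u v x y, ← quad_swap1 h c G H _ _ x y]
    rcases gd_cases h c y with hy | hy | hy
    · exact (quad_fix2 h c G H u v _ y hy).ge
    · exact quad_good h hG hH u v hx hy
    · rw [← quad_swap2 h c G H u v _ y, ← quad_swap2 h c G H _ _ _ y]
      exact quad_good h hG hH u v hx hy

theorem En_polF_le (h : IsDir e τ) (c : Bool) {G : NNReal → NNReal → NNReal}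
    (hG : Supermodular G) {H : NNReal → NNReal} (hH : Antitone H) (u v : ZLat d → NNReal) :
    En G H u v ≤ En G H (polF e τ c u) (polF e τ c v) := by
  have : 4 * En G H u v ≤ 4 * En G H (polF e τ c u) (polF e τ c v) := by
    rw [← four_En h c, ← four_En h c]
    refine ENNReal.tsum_le_tsum fun x => ENNReal.tsum_le_tsum fun y => ?_
    exact_mod_cast quad_le h hG hH u v x y
  exact (ENNReal.mul_le_mul_iff_right (by norm_num) (by norm_num)).1 this

theorem En_polF_lt (h : IsDir e τ) (c : Bool) {G : NNReal → NNReal → NNReal}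
    (hG : Supermodular G) (hGs : StrictlySupermodular G)
    {H : NNReal → NNReal} (hH : Antitone H) (u v : ZLat d → NNReal)
    (hfin : En G H u v < ⊤) {x y : ZLat d} (hx : gd c (pairing e x)) (hy : gd c (pairing e y))
    (hux : u (rfx e τ c x) < u x) (hvy : v y < v (rfx e τ c y))
    (hHd : H (latDist x (rfx e τ c y)) < H (latDist x y)) :
    En G H u v < En G H (polF e τ c u) (polF e τ c v) := by
  have hq : quad e τ c G H u v x y < quad e τ c G H (polF e τ c u) (polF e τ c v) x y := by
    unfold quad
    rw [(polF_good h u hx).1, (polF_good h u hx).2, (polF_good h v hy).1, (polF_good h v hy).2,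
      dist_swap h, h.isom, max_eq_left hux.le, min_eq_right hux.le, max_eq_right hvy.le,
      min_eq_left hvy.le]
    have := arith2 hHd (strict_cross hGs hux hvy)
    linarith
  have h4 : 4 * En G H u v < ⊤ := ENNReal.mul_lt_top (by norm_num) hfin
  have : 4 * En G H u v < 4 * En G H (polF e τ c u) (polF e τ c v) := by
    rw [← four_En h c] at h4 ⊢
    rw [← four_En h c]
    have hle : ∀ a b : ZLat d, ((quad e τ c G H u v a b : NNReal) : ENNReal) ≤
        ((quad e τ c G H (polF e τ c u) (polF e τ c v) a b : NNReal) : ENNReal) := by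
      intro a b
      exact_mod_cast quad_le h hG hH u v a b
    refine ENNReal.tsum_lt_tsum (i := x) h4.ne
      (fun a => ENNReal.tsum_le_tsum fun b => hle a b) ?_
    refine ENNReal.tsum_lt_tsum (i := y) ?_ (fun b => hle x b) (by exact_mod_cast hq)
    exact ne_top_of_le_ne_top h4.ne (ENNReal.le_tsum x)
  exact (ENNReal.mul_lt_mul_iff_right (by norm_num) (by norm_num)).1 this

theorem En_limit {G : NNReal → NNReal → NNReal} (hG : Supermodular G) (hG0 : G 0 0 = 0)
    {H : NNReal → NNReal} {u v u' v' : ZLat d → NNReal}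
    (hle : ∀ t, 0 < t → En G H (trunc t u) (trunc t v) ≤ En G H (trunc t u') (trunc t v')) :
    En G H u v ≤ En G H u' v' := by
  have hmono : ∀ t, En G H (trunc t u') (trunc t v') ≤ En G H u' v' := by
    intro t
    refine ENNReal.tsum_le_tsum fun x => ENNReal.tsum_le_tsum fun y => ?_
    have h0 := hG 0 0 (u' x) (v' y)
    simp only [zero_add, hG0, add_zero] at h0
    have : G (trunc t u' x) (trunc t v' y) ≤ G (u' x) (v' y) := by
      unfold trunc
      split_ifs
      · exact le_rfl
      · exact le_self_add.trans h0
      · exact le_add_self.trans h0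
      · rw [hG0]; exact zero_le
    exact_mod_cast mul_le_mul_left this _
  have e1 : En G H u v = ∑' p : ZLat d × ZLat d,
      ((G (u p.1) (v p.2) * H (latDist p.1 p.2) : NNReal) : ENNReal) :=
    (ENNReal.tsum_prod (f := fun x y =>
      ((G (u x) (v y) * H (latDist x y) : NNReal) : ENNReal))).symm
  rw [e1, ENNReal.tsum_eq_iSup_sum]
  refine iSup_le fun s => ?_
  have hsmall : ∀ (w : ZLat d → NNReal) (x : ZLat d), ∃ t0, 0 < t0 ∧
      ∀ t < t0, trunc t w x = w x := by
    intro w x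
    by_cases hw : 0 < w x
    · refine ⟨w x, hw, fun t ht => ?_⟩
      simp [trunc, ht]
    · refine ⟨1, one_pos, fun t _ => ?_⟩
      have : w x = 0 := by simpa using hw
      simp [trunc, this]
  have hs : ∃ t0, 0 < t0 ∧ ∀ t < t0, ∀ p ∈ s, trunc t u p.1 = u p.1 ∧ trunc t v p.2 = v p.2 := by
    induction s using Finset.cons_induction with
    | empty => exact ⟨1, one_pos, by simp⟩
    | cons a s ha ih =>
      obtain ⟨t0, h0, h1⟩ := ih
      obtain ⟨t1, h2, h3⟩ := hsmall u a.1
      obtain ⟨t2, h4, h5⟩ := hsmall v a.2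
      refine ⟨min t0 (min t1 t2), by simp [h0, h2, h4], fun t ht p hp => ?_⟩
      simp only [lt_min_iff] at ht
      rcases Finset.mem_cons.1 hp with rfl | hp
      · exact ⟨h3 t ht.2.1, h5 t ht.2.2⟩
      · exact h1 t ht.1 p hp
  obtain ⟨t0, h0, h1⟩ := hs
  obtain ⟨t, ht, ht0⟩ := exists_between h0
  refine le_trans ?_ ((hle t ht).trans (hmono t))
  have e2 : En G H (trunc t u) (trunc t v) = ∑' p : ZLat d × ZLat d,
      ((G (trunc t u p.1) (trunc t v p.2) * H (latDist p.1 p.2) : NNReal) : ENNReal) :=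
    (ENNReal.tsum_prod (f := fun x y =>
      ((G (trunc t u x) (trunc t v y) * H (latDist x y) : NNReal) : ENNReal))).symm
  rw [e2]
  refine le_trans (le_of_eq ?_) (ENNReal.sum_le_tsum s)
  refine Finset.sum_congr rfl fun p hp => ?_
  rw [(h1 t ht0 p hp).1, (h1 t ht0 p hp).2]

theorem trunc_fin {t : NNReal} (ht : 0 < t) {u : ZLat d → NNReal} (hu : Admissible u) :
    {x | 0 < trunc t u x}.Finite := by
  rw [trunc_level]
  exact hu _ (lt_max_of_lt_right ht)

theorem En_itP_le (h : IsDir e τ) {G : NNReal → NNReal → NNReal}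
    (hG : Supermodular G) {H : NNReal → NNReal} (hH : Antitone H) (u v : ZLat d → NNReal) (k : ℕ) :
    En G H u v ≤ En G H (itP e τ u k) (itP e τ v k) := by
  induction k with
  | zero => exact le_rfl
  | succ k ih => exact ih.trans (En_polF_le h _ hG hH _ _)

theorem En_stepR_le (h : IsDir e τ) {G : NNReal → NNReal → NNReal}
    (hG : Supermodular G) (hG0 : G 0 0 = 0) {H : NNReal → NNReal} (hH : Antitone H)
    {u v : ZLat d → NNReal} (hu : Admissible u) (hv : Admissible v) :
    En G H u v ≤ En G H (stepR e u) (stepR e v) := by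
  apply En_limit hG hG0
  intro t ht
  rw [← stepR_trunc e t hu, ← stepR_trunc e t hv]
  obtain ⟨N, hN⟩ := itP_stepR h (trunc_adm t hu) (trunc_fin ht hu)
  obtain ⟨M, hM⟩ := itP_stepR h (trunc_adm t hv) (trunc_fin ht hv)
  rw [← hN (max N M) (le_max_left _ _), ← hM (max N M) (le_max_right _ _)]
  exact En_itP_le h hG hH _ _ _

end dir3

section concrete
variable {d : ℕ}

theorem sum_one {M : Type*} [AddCommMonoid M] (f : Fin d → M) (i : Fin d) :
    ∑ k, f k = f i + ∑ k ∈ Finset.univ.erase i, f k :=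
  (Finset.add_sum_erase _ _ (Finset.mem_univ i)).symm

theorem sum_two {M : Type*} [AddCommMonoid M] (f : Fin d → M) {i j : Fin d} (hij : i ≠ j) :
    ∑ k, f k = f i + (f j + ∑ k ∈ (Finset.univ.erase i).erase j, f k) := by
  have hj : j ∈ Finset.univ.erase i := by simp [hij.symm]
  rw [sum_one f i, Finset.add_sum_erase _ f hj]

theorem pot_cast (x : ZLat d) :
    (pot x : ℤ) = ∑ i : Fin d, (((d : ℤ) + 1) * (x i)^2 - ((d : ℤ) - (i : ℕ)) * x i) := by
  unfold pot
  push_cast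
  refine Finset.sum_congr rfl fun i _ => ?_
  apply Int.toNat_of_nonneg
  have hi : ((i : ℕ) : ℤ) < d := by exact_mod_cast i.2
  have hi0 : (0 : ℤ) ≤ ((i : ℕ) : ℤ) := by positivity
  have h2 : x i ≤ (x i)^2 := by
    rcases le_or_gt (x i) 0 with h | h <;> nlinarith
  nlinarith [sq_nonneg (x i), mul_le_mul_of_nonneg_left h2 (show (0:ℤ) ≤ d - (i:ℕ) by omega)]

theorem sameLine_gen {e : Fin d → ℝ} {τ : ZLat d} {N : ℝ}
    (he : ∀ k, e k * N = (τ k : ℝ)) (i : Fin d) (hi : τ i = 1) (x y : ZLat d) :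
    sameLine e x y ↔ ∃ k : ℤ, y = x + k • τ := by
  constructor
  · rintro ⟨c, hc⟩
    have hk : ∀ k, (x k : ℝ) - y k = c * e k := fun k => congrFun hc k
    refine ⟨y i - x i, ?_⟩
    ext k
    simp only [Pi.add_apply, Pi.smul_apply, smul_eq_mul]
    have h1 := hk i
    have h2 := hk k
    have h3 := he i
    have h4 := he k
    rw [hi] at h3
    push_cast at h3
    have h5 : ((y k : ℤ) : ℝ) = x k + (y i - x i) * τ k := by
      rw [← h4]
      have : (y i : ℝ) - x i = - (c * e i) := by linarith
      rw [this]
      have : (y k : ℝ) = x k - c * e k := by linarith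
      rw [this]
      have : e i * N = 1 := h3
      linear_combination (c * e k) * this
    exact_mod_cast h5
  · rintro ⟨k, rfl⟩
    refine ⟨- k * N, ?_⟩
    funext l
    simp only [Pi.add_apply, Pi.smul_apply, smul_eq_mul]
    push_cast
    rw [← he l]
    ring

/-- axis direction -/
theorem isDir_axis (i : Fin d) : IsDir (stdVec d i) (latE i) := by
  have hp : ∀ x : ZLat d, pairing (stdVec d i) x = 2 * x i := by
    intro x
    unfold pairing
    have : ∑ k, stdVec d i k * (x k : ℝ) = x i := by simp [stdVec]
    rw [this]
    have : (2 : ℝ) * (x i : ℝ) = ((2 * x i : ℤ) : ℝ) := by push_cast; ring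
    rw [this, Int.floor_intCast]
  have hτi : latE (d := d) i i = 1 := by simp [latE]
  have hτk : ∀ k, k ≠ i → latE (d := d) i k = 0 := fun k hk => by simp [latE, hk]
  have hri : ∀ c x, rfx (stdVec d i) (latE i) c x i = cz c - x i := by
    intro c x
    simp only [rfx, Pi.add_apply, Pi.smul_apply, hτi, hp, smul_eq_mul]; ring
  have hrk : ∀ c x k, k ≠ i → rfx (stdVec d i) (latE i) c x k = x k := by
    intro c x k hk
    simp [rfx, hτk k hk]
  constructor
  · intro x k
    rw [hp, hp]
    simp only [Pi.add_apply, Pi.smul_apply, hτi, smul_eq_mul]; ring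
  · refine sameLine_gen (N := 1) ?_ i hτi
    intro k
    by_cases hk : k = i <;> simp [stdVec, latE, hk]
  · intro c x y
    unfold latDist
    rw [sum_one _ i, sum_one _ i, hri, hri]
    congr 1
    · omega
    · refine Finset.sum_congr rfl fun k hk => ?_
      rw [hrk c x k (Finset.ne_of_mem_erase hk), hrk c y k (Finset.ne_of_mem_erase hk)]
  · intro c x y hs
    rw [hp, hp] at hs
    unfold latDist
    rw [sum_one _ i, sum_one _ i, hri]
    apply add_le_add
    · rcases mul_nonneg_iff.1 hs with h | h <;> cases c <;> simp [cz] at * <;> omega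
    · refine (Finset.sum_congr rfl fun k hk => ?_).le
      rw [hrk c y k (Finset.ne_of_mem_erase hk)]
  · intro c x hg
    rw [hp] at hg
    zify
    rw [pot_cast, pot_cast, sum_one _ i, sum_one _ i, hri]
    have hcong : ∑ k ∈ Finset.univ.erase i, (((d : ℤ) + 1) * (rfx (stdVec d i) (latE i) c x k)^2 -
        ((d : ℤ) - (k : ℕ)) * rfx (stdVec d i) (latE i) c x k) =
        ∑ k ∈ Finset.univ.erase i, (((d : ℤ) + 1) * (x k)^2 - ((d : ℤ) - (k : ℕ)) * x k) := by
      refine Finset.sum_congr rfl fun k hk => ?_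
      rw [hrk c x k (Finset.ne_of_mem_erase hk)]
    rw [hcong]
    have hi : ((i : ℕ) : ℤ) < d := by exact_mod_cast i.2
    have hi0 : (0 : ℤ) ≤ ((i : ℕ) : ℤ) := by positivity
    cases c
    · simp only [gd, cz, Bool.false_eq_true, if_false] at hg ⊢
      nlinarith [mul_pos (show (0:ℤ) < d - (i:ℕ) by omega) hg]
    · simp only [gd, cz, if_true] at hg ⊢
      nlinarith [mul_pos (show (0:ℤ) < d + 1 - (d - (i:ℕ)) by omega)
        (show (0:ℤ) < 1 - 2 * x i by omega)]
  · intro c y n hy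
    rw [hp] at hy
    have main : ∀ s : ℤ, (s = 1 ∨ s = -1) → 0 < s * (2 * y i - cz c) → ∃ x,
        0 < (pairing (stdVec d i) x - cz c) * (pairing (stdVec d i) y - cz c) ∧
        latDist x y ≤ n ∧ n + 1 ≤ latDist x (rfx (stdVec d i) (latE i) c y) := by
      intro s hs hpos
      have hxi : (y + (s * n) • latE i) i = y i + s * n := by
        simp [hτi]
      have hxk : ∀ k, k ≠ i → (y + (s * n) • latE i) k = y k := by
        intro k hk; simp [hτk k hk]
      refine ⟨y + (s * n) • latE i, ?_, ?_, ?_⟩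
      · rw [hp, hp, hxi]
        rcases hs with rfl | rfl
        · apply mul_pos <;> nlinarith
        · apply mul_pos_of_neg_of_neg <;> nlinarith
      · unfold latDist
        rw [sum_one _ i, hxi, Finset.sum_eq_zero]
        · rcases hs with rfl | rfl <;> simp
        · intro k hk
          rw [hxk k (Finset.ne_of_mem_erase hk)]; simp
      · unfold latDist
        rw [sum_one _ i, hxi, hri]
        refine le_trans ?_ (Nat.le_add_right _ _)
        rcases hs with rfl | rfl <;> cases c <;> simp [cz] at * <;> omega
    rcases lt_or_gt_of_ne hy with h1 | h1
    · exact main (-1) (Or.inr rfl) (by omega)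
    · exact main 1 (Or.inl rfl) (by omega)

/-- diagonal directions -/
theorem isDir_diag {i j : Fin d} (hij : i < j) {s : ℤ} (hs : s = 1 ∨ s = -1) :
    IsDir (fun k => (stdVec d i k + s * stdVec d j k) / 2) (latE i + s • latE j) := by
  have hne : i ≠ j := hij.ne
  set e : Fin d → ℝ := fun k => (stdVec d i k + s * stdVec d j k) / 2 with he
  set τ : ZLat d := latE i + s • latE j with hτ
  have hp : ∀ x : ZLat d, pairing e x = x i + s * x j := by
    intro x
    unfold pairing
    have : ∑ k, e k * (x k : ℝ) = (x i + s * x j) / 2 := by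
      rw [sum_two _ hne, Finset.sum_eq_zero]
      · simp [he, stdVec, hne, hne.symm]; ring
      · intro k hk
        simp only [Finset.mem_erase, Finset.mem_univ] at hk
        simp [he, stdVec, hk.1, hk.2.1]
    rw [this]
    have : (2 : ℝ) * (((x i : ℝ) + s * x j) / 2) = ((x i + s * x j : ℤ) : ℝ) := by
      push_cast; ring
    rw [this, Int.floor_intCast]
  have hτi : τ i = 1 := by simp [hτ, latE, hne]
  have hτj : τ j = s := by simp [hτ, latE, hne.symm]
  have hτk : ∀ k, k ≠ i → k ≠ j → τ k = 0 := fun k hk hk' => by simp [hτ, latE, hk, hk']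
  have hri : ∀ c x, rfx e τ c x i = cz c - s * x j := by
    intro c x
    simp only [rfx, Pi.add_apply, Pi.smul_apply, hτi, hp, smul_eq_mul]; ring
  have hrj : ∀ c x, rfx e τ c x j = s * cz c - s * x i := by
    intro c x
    simp only [rfx, Pi.add_apply, Pi.smul_apply, hτj, hp, smul_eq_mul]
    rcases hs with rfl | rfl <;> ring
  have hrk : ∀ c x k, k ≠ i → k ≠ j → rfx e τ c x k = x k := by
    intro c x k hk hk'
    simp [rfx, hτk k hk hk']
  have hmem : ∀ k, k ∈ (Finset.univ.erase i).erase j → k ≠ i ∧ k ≠ j := by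
    intro k hk
    simp only [Finset.mem_erase, Finset.mem_univ] at hk
    exact ⟨hk.2.1, hk.1⟩
  constructor
  · intro x k
    rw [hp, hp]
    simp only [Pi.add_apply, Pi.smul_apply, hτi, hτj, smul_eq_mul]
    rcases hs with rfl | rfl <;> ring
  · refine sameLine_gen (N := 2) ?_ i hτi
    intro k
    simp only [he, hτ, stdVec, latE, Pi.add_apply, Pi.smul_apply, smul_eq_mul]
    push_cast
    ring
  · intro c x y
    unfold latDist
    rw [sum_two _ hne, sum_two _ hne, hri, hri, hrj, hrj]
    have : ∑ k ∈ (Finset.univ.erase i).erase j, (rfx e τ c x k - rfx e τ c y k).natAbs =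
        ∑ k ∈ (Finset.univ.erase i).erase j, (x k - y k).natAbs := by
      refine Finset.sum_congr rfl fun k hk => ?_
      rw [hrk c x k (hmem k hk).1 (hmem k hk).2, hrk c y k (hmem k hk).1 (hmem k hk).2]
    rw [this]
    rcases hs with rfl | rfl <;> omega
  · intro c x y hsd
    rw [hp, hp] at hsd
    unfold latDist
    rw [sum_two _ hne, sum_two (fun k => (x k - rfx e τ c y k).natAbs) hne, hri, hrj]
    have : ∑ k ∈ (Finset.univ.erase i).erase j, (x k - rfx e τ c y k).natAbs =
        ∑ k ∈ (Finset.univ.erase i).erase j, (x k - y k).natAbs := by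
      refine Finset.sum_congr rfl fun k hk => ?_
      rw [hrk c y k (hmem k hk).1 (hmem k hk).2]
    rw [this]
    generalize cz c = q at *
    rcases mul_nonneg_iff.1 hsd with h | h <;> rcases hs with rfl | rfl <;> omega
  · intro c x hg
    rw [hp] at hg
    zify
    rw [pot_cast, pot_cast, sum_two _ hne, sum_two _ hne, hri, hrj]
    have hcong : ∑ k ∈ (Finset.univ.erase i).erase j, (((d : ℤ) + 1) * (rfx e τ c x k)^2 -
        ((d : ℤ) - (k : ℕ)) * rfx e τ c x k) =
        ∑ k ∈ (Finset.univ.erase i).erase j,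
          (((d : ℤ) + 1) * (x k)^2 - ((d : ℤ) - (k : ℕ)) * x k) := by
      refine Finset.sum_congr rfl fun k hk => ?_
      rw [hrk c x k (hmem k hk).1 (hmem k hk).2]
    rw [hcong]
    have hj : ((j : ℕ) : ℤ) < d := by exact_mod_cast j.2
    have hi0 : (0 : ℤ) ≤ ((i : ℕ) : ℤ) := by positivity
    have hij' : ((i : ℕ) : ℤ) < ((j : ℕ) : ℤ) := by exact_mod_cast hij
    generalize ((i : ℕ) : ℤ) = I at *
    generalize ((j : ℕ) : ℤ) = J at *
    generalize ((d : ℕ) : ℤ) = D at *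
    cases c
    · simp only [gd, cz, Bool.false_eq_true, if_false] at hg ⊢
      rcases hs with rfl | rfl
      · nlinarith [mul_pos (show (0:ℤ) < (D - I) + (D - J) by omega) hg]
      · nlinarith [mul_pos (show (0:ℤ) < (D - I) - (D - J) by omega) hg]
    · simp only [gd, cz, if_true] at hg ⊢
      rcases hs with rfl | rfl
      · nlinarith [mul_pos (show (0:ℤ) < 2 * (D + 1) - ((D - I) + (D - J)) by omega)
          (show (0:ℤ) < 1 - (x i + 1 * x j) by omega)]
      · nlinarith [mul_pos (show (0:ℤ) < 2 * (D + 1) - ((D - I) - (D - J)) by omega)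
          (show (0:ℤ) < 1 - (x i + -1 * x j) by omega)]
  · intro c y n hy
    rw [hp] at hy
    have main : ∀ r : ℤ, (r = 1 ∨ r = -1) → 0 < r * (y i + s * y j - cz c) → ∃ x,
        0 < (pairing e x - cz c) * (pairing e y - cz c) ∧
        latDist x y ≤ n ∧ n + 1 ≤ latDist x (rfx e τ c y) := by
      intro r hr hpos
      have hxi : (y + (r * n) • latE i) i = y i + r * n := by
        simp [latE]
      have hxk : ∀ k, k ≠ i → (y + (r * n) • latE i) k = y k := by
        intro k hk; simp [latE, hk]
      refine ⟨y + (r * n) • latE i, ?_, ?_, ?_⟩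
      · rw [hp, hp, hxi, hxk j hne.symm]
        rcases hr with rfl | rfl
        · apply mul_pos <;> nlinarith
        · apply mul_pos_of_neg_of_neg <;> nlinarith
      · unfold latDist
        rw [sum_one _ i, hxi, Finset.sum_eq_zero]
        · rcases hr with rfl | rfl <;> simp
        · intro k hk
          rw [hxk k (Finset.ne_of_mem_erase hk)]; simp
      · unfold latDist
        rw [sum_one _ i, hxi, hri]
        refine le_trans ?_ (Nat.le_add_right _ _)
        generalize cz c = q at *
        rcases hr with rfl | rfl <;> rcases hs with rfl | rfl <;> omega
    rcases lt_or_gt_of_ne hy with h1 | h1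
    · exact main (-1) (Or.inr rfl) (by omega)
    · exact main 1 (Or.inl rfl) (by omega)

theorem pairing_axis (i : Fin d) (x : ZLat d) : pairing (stdVec d i) x = 2 * x i := by
  unfold pairing
  have : ∑ k, stdVec d i k * (x k : ℝ) = x i := by simp [stdVec]
  rw [this]
  have : (2 : ℝ) * (x i : ℝ) = ((2 * x i : ℤ) : ℝ) := by push_cast; ring
  rw [this, Int.floor_intCast]

theorem evec_isDir {e : Fin d → ℝ} (he : e ∈ EvecList d) : ∃ τ, IsDir e τ := by
  simp only [EvecList, List.mem_append, List.mem_map, List.mem_flatMap, List.mem_filterMap,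
    List.mem_finRange, true_and] at he
  rcases he with (⟨i, rfl⟩ | ⟨i, j, h⟩) | ⟨i, j, h⟩
  · exact ⟨_, isDir_axis i⟩
  · split_ifs at h with hij
    simp only [Option.some.injEq] at h
    subst h
    have := isDir_diag hij (s := 1) (Or.inl rfl)
    simp only [Int.cast_one, one_mul] at this
    exact ⟨_, this⟩
  · split_ifs at h with hij
    simp only [Option.some.injEq] at h
    subst h
    have := isDir_diag hij (s := -1) (Or.inr rfl)
    simp only [Int.cast_neg, Int.cast_one, neg_mul, one_mul, ← sub_eq_add_neg] at this
    exact ⟨_, this⟩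

theorem axis_mem (i : Fin d) : stdVec d i ∈ EvecList d := by
  simp [EvecList]

theorem diag_mem {i j : Fin d} (hij : i < j) :
    (fun k => (stdVec d i k - stdVec d j k) / 2) ∈ EvecList d := by
  simp only [EvecList, List.mem_append, List.mem_map, List.mem_flatMap, List.mem_filterMap,
    List.mem_finRange, true_and]
  right
  exact ⟨i, j, by simp [hij]⟩

end concrete

section final
variable {d : ℕ}

/-- direction used at step `k` -/
def dirAt (d k : ℕ) : Fin d → ℝ := (EvecList d).getD (k % (EvecList d).length) 0

theorem evec_len (hd : 2 ≤ d) : 0 < (EvecList d).length :=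
  List.length_pos_of_mem (axis_mem (⟨0, by omega⟩ : Fin d))

theorem dirAt_mem (hd : 2 ≤ d) (k : ℕ) : dirAt d k ∈ EvecList d := by
  unfold dirAt
  have := Nat.mod_lt k (evec_len hd)
  rw [List.getD_eq_getElem _ _ this]
  exact List.getElem_mem _

theorem dirAt_hit (hd : 2 ≤ d) {e : Fin d → ℝ} (he : e ∈ EvecList d) (N : ℕ) :
    ∃ k, N ≤ k ∧ dirAt d k = e := by
  obtain ⟨j, hj, rfl⟩ := List.mem_iff_getElem.1 he
  refine ⟨j + (EvecList d).length * N, ?_, ?_⟩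
  · have := Nat.le_mul_of_pos_left N (evec_len hd)
    omega
  · unfold dirAt
    rw [Nat.add_mul_mod_self_left, Nat.mod_eq_of_lt hj, List.getD_eq_getElem _ _ hj]

theorem iterR_succ (u : ZLat d → NNReal) (k : ℕ) :
    iterR d u (k + 1) = stepR (dirAt d k) (iterR d u k) := rfl

theorem iterR_adm (hd : 2 ≤ d) {u : ZLat d → NNReal} (hu : Admissible u) (k : ℕ) :
    Admissible (iterR d u k) := by
  induction k with
  | zero => exact hu
  | succ k ih =>
    obtain ⟨τ, h⟩ := evec_isDir (dirAt_mem hd k)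
    rw [iterR_succ]
    exact stepR_adm h ih

theorem iterR_level (hd : 2 ≤ d) {u : ZLat d → NNReal} (hu : Admissible u) (t : NNReal) (k : ℕ) :
    {x | t < iterR d u k x} = itS (fun k => rearS (dirAt d k)) {x | t < u x} k := by
  induction k with
  | zero => rfl
  | succ k ih =>
    rw [iterR_succ, stepR_level _ (iterR_adm hd hu k), ih]
    rfl

theorem iterR_trunc (hd : 2 ≤ d) {u : ZLat d → NNReal} (hu : Admissible u) (t : NNReal) (k : ℕ) :
    iterR d (trunc t u) k = trunc t (iterR d u k) := by
  induction k with
  | zero => rfl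
  | succ k ih =>
    rw [iterR_succ, iterR_succ, ih, stepR_trunc _ t (iterR_adm hd hu k)]

theorem iterR_stab (hd : 2 ≤ d) {u : ZLat d → NNReal} (hu : Admissible u) {t0 : NNReal}
    (ht0 : 0 < t0) : ∃ N, ∀ k, N ≤ k → ∀ t, t0 ≤ t →
      {x | t < iterR d u k x} = {x | t < iterR d u N x} := by
  have hρ : ∀ (k : ℕ) (A : Set (ZLat d)), Impr A (rearS (dirAt d k) A) := by
    intro k A
    obtain ⟨τ, h⟩ := evec_isDir (dirAt_mem hd k)
    exact rearS_impr h A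
  obtain ⟨N, hN⟩ := itS_stab_unif hρ (hu t0 ht0)
  refine ⟨N, fun k hk t ht => ?_⟩
  rw [iterR_level hd hu, iterR_level hd hu]
  apply hN _ _ k hk
  intro x hx
  have hx' : t < u x := hx
  exact ht.trans_lt hx'

theorem RZd_level (hd : 2 ≤ d) {u : ZLat d → NNReal} (hu : Admissible u) {t0 : NNReal}
    (ht0 : 0 < t0) : ∃ N, ∀ k, N ≤ k → ∀ t, t0 ≤ t →
      {x | t < RZd d u x} = {x | t < iterR d u k x} := by
  have hmax : ∀ t0 : NNReal, 0 < t0 → ∃ N, ∀ k, N ≤ k → ∀ x,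
      max (iterR d u k x) t0 = max (iterR d u N x) t0 := by
    intro t0 ht0
    obtain ⟨N, hN⟩ := iterR_stab hd hu ht0
    refine ⟨N, fun k hk x => eq_of_forall_lt_iff fun t => ?_⟩
    rw [lt_max_iff, lt_max_iff]
    rcases lt_or_ge t t0 with h | h
    · simp [h]
    · have := Set.ext_iff.1 (hN k hk t h) x
      simp only [Set.mem_ofPred_eq] at this
      rw [this]
  have hconv : ∀ x, ∃ L, Tendsto (fun k => iterR d u k x) atTop (𝓝 L) := by
    intro x
    apply cauchySeq_tendsto_of_complete
    rw [Metric.cauchySeq_iff']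
    intro ε hε
    have hε' : 0 < (⟨ε, hε.le⟩ : NNReal) := hε
    obtain ⟨t, ht, htε⟩ := exists_between hε'
    obtain ⟨N, hN⟩ := hmax t ht
    refine ⟨N, fun k hk => ?_⟩
    have h1 := hN k hk x
    have h2 : (t : ℝ) < ε := htε
    have h1' : max (iterR d u k x : ℝ) t = max (iterR d u N x : ℝ) t := by
      exact (NNReal.coe_max _ _).symm.trans ((congrArg NNReal.toReal h1).trans (NNReal.coe_max _ _))
    have h3 : (0 : ℝ) ≤ iterR d u k x := NNReal.coe_nonneg _
    have h4 : (0 : ℝ) ≤ iterR d u N x := NNReal.coe_nonneg _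
    rw [NNReal.dist_eq, abs_lt]
    rcases max_cases (iterR d u k x : ℝ) t with h5 | h5 <;>
      rcases max_cases (iterR d u N x : ℝ) t with h6 | h6 <;>
      constructor <;> linarith
  have hlim : ∀ x, Tendsto (fun k => iterR d u k x) atTop (𝓝 (RZd d u x)) := by
    intro x
    exact tendsto_nhds_limUnder (hconv x)
  obtain ⟨N, hN⟩ := hmax t0 ht0
  refine ⟨N, fun k hk t ht => ?_⟩
  ext x
  have h1 : Tendsto (fun k => max (iterR d u k x) t0) atTop (𝓝 (max (RZd d u x) t0)) :=
    (hlim x).max tendsto_const_nhds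
  have h2 : Tendsto (fun k => max (iterR d u k x) t0) atTop (𝓝 (max (iterR d u N x) t0)) := by
    refine tendsto_const_nhds.congr' ?_
    filter_upwards [eventually_ge_atTop N] with k hk
    exact (hN k hk x).symm
  have h3 := tendsto_nhds_unique h1 h2
  rw [← hN k hk x] at h3
  simp only [Set.mem_ofPred_eq]
  have h4 : t < max (RZd d u x) t0 ↔ t < max (iterR d u k x) t0 := by rw [h3]
  rw [lt_max_iff, lt_max_iff] at h4
  simpa [not_lt.2 ht] using h4

theorem RZd_adm (hd : 2 ≤ d) {u : ZLat d → NNReal} (hu : Admissible u) : Admissible (RZd d u) := by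
  intro t ht
  obtain ⟨N, hN⟩ := RZd_level hd hu ht
  rw [hN N le_rfl t le_rfl]
  exact iterR_adm hd hu N t ht

theorem level_ext_pos {α : Type*} {f g : α → NNReal}
    (h : ∀ t, 0 < t → {x | t < f x} = {x | t < g x}) : f = g := by
  funext x
  by_contra hne
  rcases lt_or_gt_of_ne hne with h1 | h1
  · obtain ⟨t, h2, h3⟩ := exists_between h1
    have : x ∈ {x | t < f x} := by rw [h t (pos_of_gt h2)]; exact h3
    exact absurd (show t < f x from this) (not_lt.2 h2.le)
  · obtain ⟨t, h2, h3⟩ := exists_between h1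
    have : x ∈ {x | t < g x} := by rw [← h t (pos_of_gt h2)]; exact h3
    exact absurd (show t < g x from this) (not_lt.2 h2.le)

theorem stepR_RZd (hd : 2 ≤ d) {u : ZLat d → NNReal} (hu : Admissible u) {e : Fin d → ℝ}
    (he : e ∈ EvecList d) : stepR e (RZd d u) = RZd d u := by
  apply level_ext_pos
  intro t ht
  rw [stepR_level e (RZd_adm hd hu)]
  obtain ⟨N, hN⟩ := RZd_level hd hu ht
  obtain ⟨k, hk, rfl⟩ := dirAt_hit hd he N
  rw [hN k hk t le_rfl, ← stepR_level _ (iterR_adm hd hu k), ← iterR_succ, 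
    ← hN (k + 1) (by omega) t le_rfl, hN k hk t le_rfl]

theorem En_iterR_mono (hd : 2 ≤ d) {G : NNReal → NNReal → NNReal}
    (hG : Supermodular G) (hG0 : G 0 0 = 0) {H : NNReal → NNReal} (hH : Antitone H)
    {u v : ZLat d → NNReal} (hu : Admissible u) (hv : Admissible v) {j k : ℕ} (hjk : j ≤ k) :
    En G H (iterR d u j) (iterR d v j) ≤ En G H (iterR d u k) (iterR d v k) := by
  induction k, hjk using Nat.le_induction with
  | base => exact le_rfl
  | succ k hk ih =>
    obtain ⟨τ, h⟩ := evec_isDir (dirAt_mem hd k)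
    exact ih.trans (En_stepR_le h hG hG0 hH (iterR_adm hd hu k) (iterR_adm hd hv k))

theorem trunc_RZd (hd : 2 ≤ d) {u : ZLat d → NNReal} (hu : Admissible u) {t : NNReal}
    (ht : 0 < t) : ∃ N, ∀ k, N ≤ k → trunc t (RZd d u) = iterR d (trunc t u) k := by
  obtain ⟨N, hN⟩ := RZd_level hd hu ht
  refine ⟨N, fun k hk => ?_⟩
  rw [iterR_trunc hd hu]
  apply level_ext
  intro s
  rw [trunc_level, trunc_level, hN k hk _ (le_max_right _ _)]

theorem En_iterR_le (hd : 2 ≤ d) {G : NNReal → NNReal → NNReal}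
    (hG : Supermodular G) (hG0 : G 0 0 = 0) {H : NNReal → NNReal} (hH : Antitone H)
    {u v : ZLat d → NNReal} (hu : Admissible u) (hv : Admissible v) (j : ℕ) :
    En G H (iterR d u j) (iterR d v j) ≤ En G H (RZd d u) (RZd d v) := by
  apply En_limit hG hG0
  intro t ht
  obtain ⟨N, hN⟩ := trunc_RZd hd hu ht
  obtain ⟨M, hM⟩ := trunc_RZd hd hv ht
  rw [hN (max j (max N M)) (by omega), hM (max j (max N M)) (by omega), ← iterR_trunc hd hu,
    ← iterR_trunc hd hv]
  exact En_iterR_mono hd hG hG0 hH (trunc_adm t hu) (trunc_adm t hv) (le_max_left _ _)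

theorem exists_change {v : ZLat d → NNReal} (hne : v ≠ RZd d v) :
    ∃ k, iterR d v (k + 1) ≠ iterR d v k := by
  by_contra hcon
  push Not at hcon
  have hc : ∀ k, iterR d v k = v := by
    intro k
    induction k with
    | zero => rfl
    | succ k ih => rw [hcon k, ih]
  apply hne
  funext x
  unfold RZd
  simp only [hc]
  exact (tendsto_const_nhds.limUnder_eq).symm

theorem pairing_diag {i j : Fin d} (hne : i ≠ j) (x : ZLat d) :
    pairing (fun k => (stdVec d i k - stdVec d j k) / 2) x = x i - x j := by
  unfold pairing
  have : ∑ k, (stdVec d i k - stdVec d j k) / 2 * (x k : ℝ) = (x i - x j) / 2 := by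
    rw [sum_two _ hne, Finset.sum_eq_zero]
    · simp [stdVec, hne, hne.symm]; ring
    · intro k hk
      simp only [Finset.mem_erase, Finset.mem_univ] at hk
      simp [stdVec, hk.1, hk.2.1]
  rw [this]
  have : (2 : ℝ) * (((x i : ℝ) - x j) / 2) = ((x i - x j : ℤ) : ℝ) := by
    push_cast; ring
  rw [this, Int.floor_intCast]

theorem full_support {A : Set (ZLat d)}
    (hA : ∀ e ∈ EvecList d, ∀ y ∈ A, ∀ z, sameLine e y z →
      posIdx (pairing e z) ≤ posIdx (pairing e y) → z ∈ A) (hinf : A.Infinite) (z : ZLat d) :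
    z ∈ A := by
  classical
  have hcoord : ∀ y ∈ A, ∀ (j : Fin d) (a : ℤ), posIdx (2 * a) ≤ posIdx (2 * y j) →
      Function.update y j a ∈ A := by
    intro y hy j a ha
    refine hA _ (axis_mem j) y hy _ ⟨(y j : ℝ) - a, ?_⟩ (by simpa [pairing_axis] using ha)
    funext k
    by_cases hk : k = j
    · subst hk; simp [stdVec]
    · simp [stdVec, hk]
  have htrans : ∀ y ∈ A, ∀ (i j : Fin d) (L : ℤ), i ≠ j → y j = 0 → 0 ≤ L → 2 * L ≤ y i →
      Function.update (Function.update y j L) i (y i - L) ∈ A := by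
    intro y hy i j L hij hj hL hLi
    rcases lt_or_gt_of_ne hij with h | h
    · refine hA _ (diag_mem h) y hy _ ⟨2 * L, ?_⟩ ?_
      · funext k
        by_cases hk : k = i
        · subst hk; simp [stdVec, hij]; ring
        · by_cases hk' : k = j
          · subst hk'; simp [stdVec, hk, hj]; ring
          · simp [stdVec, hk, hk']
      · rw [pairing_diag hij, pairing_diag hij]
        simp only [Function.update_self, Function.update_of_ne hij.symm, hj]
        unfold posIdx
        split_ifs <;> omega
    · refine hA _ (diag_mem h) y hy _ ⟨-2 * L, ?_⟩ ?_
      · funext k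
        by_cases hk : k = i
        · subst hk; simp [stdVec, hij]; ring
        · by_cases hk' : k = j
          · subst hk'; simp [stdVec, hk, hj]; ring
          · simp [stdVec, hk, hk']
      · rw [pairing_diag hij.symm, pairing_diag hij.symm]
        simp only [Function.update_self, Function.update_of_ne hij.symm, hj]
        unfold posIdx
        split_ifs <;> omega
  obtain ⟨L, hL0, hL⟩ : ∃ L : ℤ, 0 ≤ L ∧ ∀ k, |z k| < L := by
    refine ⟨∑ k, |z k| + 1, by positivity, fun k => ?_⟩
    have : |z k| ≤ ∑ k, |z k| := Finset.single_le_sum (f := fun k => |z k|) (fun k _ => abs_nonneg _)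
      (Finset.mem_univ k)
    linarith
  have hbig : ∀ M : ℤ, ∃ y ∈ A, ∃ i, M < |y i| := by
    intro M
    by_contra hcon
    push Not at hcon
    apply hinf
    refine (Set.finite_Icc (fun _ : Fin d => -M) (fun _ => M)).subset ?_
    intro y hy
    exact ⟨fun i => (abs_le.1 (hcon y hy i)).1, fun i => (abs_le.1 (hcon y hy i)).2⟩
  obtain ⟨y0, hy0, i, hi⟩ := hbig ((d + 2) * L)
  have hpos : ∀ a b : ℤ, |a| < b → posIdx (2 * a) ≤ posIdx (2 * b) := by
    intro a b hab
    rw [abs_lt] at hab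
    unfold posIdx
    split_ifs <;> omega
  have hind : ∀ S : Finset (Fin d), i ∉ S → ∃ y ∈ A, y i = (d + 2) * L - S.card * L ∧
      ∀ j ∈ S, y j = z j := by
    intro S
    induction S using Finset.induction_on with
    | empty =>
      intro _
      refine ⟨Function.update y0 i ((d + 2) * L), ?_, by simp, by simp⟩
      apply hcoord y0 hy0
      have hdL : (0 : ℤ) ≤ (d + 2) * L := by positivity
      generalize ((d : ℤ) + 2) * L = Q at *
      unfold posIdx
      rcases abs_cases (y0 i) with h | h <;> split_ifs <;> omega
    | insert j S hjS ih =>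
      intro hiS
      rw [Finset.mem_insert, not_or] at hiS
      obtain ⟨y, hy, hyi, hyS⟩ := ih hiS.2
      have hcard : S.card ≤ d := by
        simpa using Finset.card_le_univ S
      have hcard' : (S.card : ℤ) ≤ d := by exact_mod_cast hcard
      have h1 := hcoord y hy j 0 (by unfold posIdx; split_ifs <;> omega)
      have h2 := htrans _ h1 i j L hiS.1 (by simp) hL0 (by
        rw [Function.update_of_ne hiS.1, hyi]
        nlinarith)
      have h3 := hcoord _ h2 j (z j) (by
        rw [Function.update_of_ne (Ne.symm hiS.1), Function.update_self]
        exact hpos _ _ (hL j))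
      refine ⟨_, h3, ?_, ?_⟩
      · rw [Function.update_of_ne hiS.1, Function.update_self, Function.update_of_ne hiS.1, hyi,
          Finset.card_insert_of_notMem hjS]
        push_cast
        ring
      · intro k hk
        by_cases hkj : k = j
        · subst hkj; simp
        · have hkS : k ∈ S := by
            rcases Finset.mem_insert.1 hk with h | h
            · exact absurd h hkj
            · exact h
          have hki : k ≠ i := fun h => hiS.2 (h ▸ hkS)
          rw [Function.update_of_ne hkj, Function.update_of_ne hki, Function.update_of_ne hkj,
            Function.update_of_ne hkj, hyS k hkS]
  obtain ⟨y, hy, hyi, hyS⟩ := hind (Finset.univ.erase i) (by simp)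
  have hcard : (Finset.univ.erase i).card ≤ d := by
    simpa using Finset.card_le_univ (Finset.univ.erase i)
  have hcard' : ((Finset.univ.erase i).card : ℤ) ≤ d := by exact_mod_cast hcard
  have h1 := hcoord y hy i (z i) (by
    apply hpos
    refine (hL i).trans_le ?_
    rw [hyi]
    nlinarith)
  convert h1 using 1
  funext k
  by_cases hk : k = i
  · subst hk; simp
  · rw [Function.update_of_ne hk, hyS k (by simp [hk])]

theorem strictRan_infinite {u : ZLat d → NNReal} (hu : Admissible u) (hs : StrictRan u) :
    {x | 0 < u x}.Infinite := by
  intro hfin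
  have h1 : 0 < nthLargest u (hfin.toFinset.card + 1) := pos_of_gt (hs _ (by omega))
  rw [lt_nthLargest_iff hu (by omega)] at h1
  obtain ⟨Ω, hc, hΩ⟩ := h1
  have : Ω.card ≤ hfin.toFinset.card := Finset.card_le_card (by
    intro x hx
    rw [Set.Finite.mem_toFinset]
    exact hΩ x hx)
  omega

theorem strictRan_inj {u : ZLat d → NNReal} (hu : Admissible u) (hs : StrictRan u)
    {x x' : ZLat d} (hx : 0 < u x) (hne : x ≠ x') : u x ≠ u x' := by
  classical
  intro heq
  have hfin := hu (u x) hx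
  set n := hfin.toFinset.card with hn
  have h1 := hs (n + 1) (by omega)
  have h2 : u x ≤ nthLargest u (n + 1 + 1) := by
    apply le_nthLargest hu (by omega) _ (insert x (insert x' hfin.toFinset))
    · rw [Finset.card_insert_of_notMem, Finset.card_insert_of_notMem]
      · simp [heq]
      · simp [hne]
    · intro y hy
      simp only [Finset.mem_insert, Set.Finite.mem_toFinset, Set.mem_ofPred_eq] at hy
      rcases hy with rfl | rfl | hy
      · exact le_rfl
      · exact heq.le
      · exact hy.le
  have h3 : nthLargest u (n + 1) ≤ u x := by
    by_contra hcon
    rw [not_le, lt_nthLargest_iff hu (by omega)] at hcon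
    obtain ⟨Ω, hc, hΩ⟩ := hcon
    have : Ω.card ≤ hfin.toFinset.card := Finset.card_le_card (by
      intro x hx
      rw [Set.Finite.mem_toFinset]
      exact hΩ x hx)
    omega
  exact absurd (h1.trans_le h3) (not_lt.2 h2)

theorem RZd_pos (hd : 2 ≤ d) {u : ZLat d → NNReal} (hu : Admissible u) (hs : StrictRan u)
    (hfix : ∀ e ∈ EvecList d, stepR e u = u) (z : ZLat d) : 0 < u z := by
  refine full_support (A := {x | 0 < u x}) ?_ (strictRan_infinite hu hs) z
  intro e he y hy z hl hp
  obtain ⟨τ, h⟩ := evec_isDir he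
  have hB : ∀ c, polS e τ c {x | 0 < u x} = {x | 0 < u x} := by
    intro c
    rw [← polF_level, ← hfix e he, polF_stepR h c hu]
  obtain ⟨z', hz', hl', hp'⟩ := polS_desc h hB (posIdx (pairing e z))
    (posIdx (pairing e y) - posIdx (pairing e z)) y hy (posIdx_pos _) (by omega)
  have : z = z' := posIdx_inj h (line_trans h (line_symm h hl) hl') hp'.symm
  rw [this]; exact hz'

theorem polF_ne {e : Fin d → ℝ} {τ : ZLat d} (h : IsDir e τ) {c : Bool} {w : ZLat d → NNReal}
    (hne : polF e τ c w ≠ w) : ∃ y, gd c (pairing e y) ∧ w y < w (rfx e τ c y) := by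
  obtain ⟨y, hy⟩ := Function.ne_iff.1 hne
  rcases gd_cases h c y with h1 | h1 | h1
  · exact absurd (polF_fix w h1) hy
  · refine ⟨y, h1, ?_⟩
    rw [(polF_good h w h1).1] at hy
    by_contra hcon
    exact hy (max_eq_left (not_lt.1 hcon))
  · refine ⟨_, h1, ?_⟩
    have h2 := (polF_good h w h1).2
    rw [rfx_rfx h] at h2 ⊢
    rw [h2] at hy
    by_contra hcon
    exact hy (min_eq_right (not_lt.1 hcon))

theorem En_step_lt {e : Fin d → ℝ} (he : e ∈ EvecList d)
    {G : NNReal → NNReal → NNReal} (hG : Supermodular G) (hG0 : G 0 0 = 0)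
    (hGs : StrictlySupermodular G) {H : NNReal → NNReal} (hH : Antitone H) {n : ℕ}
    (hn : H ((n : NNReal) + 1) < H (n : NNReal)) {u w : ZLat d → NNReal}
    (hu : Admissible u) (hw : Admissible w) (hs : StrictRan u) (hpos : ∀ x, 0 < u x)
    (hfix : stepR e u = u) (hne : stepR e w ≠ w) (hfin : En G H u w < ⊤) :
    En G H u w < En G H (stepR e u) (stepR e w) := by
  obtain ⟨τ, h⟩ := evec_isDir he
  obtain ⟨c, hc⟩ : ∃ c, polF e τ c w ≠ w := by
    by_contra hcon
    push Not at hcon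
    exact hne (stepR_of_fix h hw hcon)
  obtain ⟨y, hgy, hwy⟩ := polF_ne h hc
  obtain ⟨x, hxy, hd1, hd2⟩ := h.far c y n (gd_ne hgy)
  have hgx : gd c (pairing e x) := by
    rcases mul_pos_iff.1 hxy with h1 | h1 <;> cases c <;> simp [gd, cz] at * <;> omega
  have hpu : polF e τ c u = u := by rw [← hfix, polF_stepR h c hu]
  have hux : u (rfx e τ c x) < u x := by
    have h1 := (polF_good h u hgx).1
    rw [hpu] at h1
    refine lt_of_le_of_ne (by rw [h1]; exact le_max_right _ _) ?_
    have hxx : rfx e τ c x ≠ x := by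
      intro heq
      have := h.potlt c x hgx
      rw [heq] at this
      exact lt_irrefl _ this
    exact strictRan_inj hu hs (hpos _) hxx
  have hHd : H (latDist x (rfx e τ c y)) < H (latDist x y) := by
    refine lt_of_le_of_lt (hH ?_) (hn.trans_le (hH ?_))
    · exact_mod_cast hd2
    · exact_mod_cast hd1
  have h1 := En_polF_lt h c hG hGs hH u w hfin hgx hgy hux hwy hHd
  have h2 := En_stepR_le h hG hG0 hH (polF_adm h c hu) (polF_adm h c hw)
  rw [stepR_polF h c hu, stepR_polF h c hw] at h2
  exact h1.trans_le h2

end final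

/-- Generalized discrete Riesz inequality on ℤ^d, with the characterization of the
equality case. -/
theorem stmt11 (d : ℕ) (hd : 2 ≤ d) (u v : ZLat d → NNReal)
    (hu : Admissible u) (hv : Admissible v)
    (H : NNReal → NNReal) (hH : Antitone H)
    (G : NNReal → NNReal → NNReal) (hG : Supermodular G) (hG0 : G 0 0 = 0) :
    (∑' (x : ZLat d) (y : ZLat d), ((G (u x) (v y) * H (latDist x y) : NNReal) : ENNReal) ≤
      ∑' (x : ZLat d) (y : ZLat d),
        ((G (RZd d u x) (RZd d v y) * H (latDist x y) : NNReal) : ENNReal)) ∧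
    (RZd d u = u → StrictRan u → StrictlySupermodular G →
      (∃ n : ℕ, H ((n : NNReal) + 1) < H (n : NNReal)) →
      (∑' (x : ZLat d) (y : ZLat d),
          ((G (RZd d u x) (RZd d v y) * H (latDist x y) : NNReal) : ENNReal)) < ⊤ →
      ((∑' (x : ZLat d) (y : ZLat d), ((G (u x) (v y) * H (latDist x y) : NNReal) : ENNReal)) =
        (∑' (x : ZLat d) (y : ZLat d),
          ((G (RZd d u x) (RZd d v y) * H (latDist x y) : NNReal) : ENNReal)) ↔
        v = RZd d v)) := by
  change En G H u v ≤ En G H (RZd d u) (RZd d v) ∧ (RZd d u = u → StrictRan u →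
    StrictlySupermodular G → (∃ n : ℕ, H ((n : NNReal) + 1) < H (n : NNReal)) →
    En G H (RZd d u) (RZd d v) < ⊤ →
    (En G H u v = En G H (RZd d u) (RZd d v) ↔ v = RZd d v))
  refine ⟨En_iterR_le hd hG hG0 hH hu hv 0, ?_⟩
  intro hfix hs hGs ⟨n, hn⟩ hfin
  constructor
  · intro heq
    by_contra hne
    obtain ⟨k, hk⟩ := exists_change hne
    have hstep : ∀ e ∈ EvecList d, stepR e u = u := by
      intro e he
      have := stepR_RZd hd hu he
      rwa [hfix] at this
    have hiter : ∀ k, iterR d u k = u := by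
      intro k
      induction k with
      | zero => rfl
      | succ k ih => rw [iterR_succ, ih, hstep _ (dirAt_mem hd k)]
    have h0 := En_iterR_mono hd hG hG0 hH hu hv (Nat.zero_le k)
    have h1 := En_iterR_le hd hG hG0 hH hu hv k
    have h2 := En_iterR_le hd hG hG0 hH hu hv (k + 1)
    rw [iterR_succ, iterR_succ, hiter k] at h2
    rw [iterR_succ] at hk
    rw [hiter k] at h0 h1
    have h3 := En_step_lt (dirAt_mem hd k) hG hG0 hGs hH hn hu (iterR_adm hd hv k) hs
      (RZd_pos hd hu hs hstep) (hstep _ (dirAt_mem hd k)) hk (h1.trans_lt hfin)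
    have h4 : En G H u v < En G H (RZd d u) (RZd d v) := lt_of_le_of_lt h0 (h3.trans_le h2)
    exact absurd heq h4.ne
  · intro hv'
    rw [hfix, ← hv']

end
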